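/- arXiv:2009.04243 — 6 statements merged into one kernel-verified Lean document; each statement's English description precedes it below -/
import Mathlib

section
/- Let K be a field and k ≥ 1 a natural number. Let r, t, a ∈ K satisfy r^(k+1) = r, t^(k+1) = t, and r ≠ t. Then the 2×2 upper triangular matrix M = !![r, a; 0, t] satisfies M^(k+1) = M, for every choice of a. -/
/-!
`M ^ (k + 1)` is upper triangular with the same diagonal as `M`, and it commutes with `M`. If its
corner is `b`, then comparing corners in `M * M ^ (k + 1) = M ^ (k + 1) * M` gives
`r * b + a * t = r * a + b * t`, that is, `r * (b - a) = (b - a) * t`. For `r ≠ t` in a field this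
forces `b = a`.
-/

open Finset

theorem upperTriangular_fin_two_pow {R : Type*} [Semiring R] (r a t : R) (n : ℕ) :
    !![r, a; 0, t] ^ n = !![r ^ n, ∑ i ∈ range n, r ^ i * a * t ^ (n - 1 - i); 0, t ^ n] := by
  induction n with
  | zero => simp [Matrix.one_fin_two]
  | succ n ih =>
    have corner_succ : ∑ i ∈ range (n + 1), r ^ i * a * t ^ (n - i) =
        r * ∑ i ∈ range n, r ^ i * a * t ^ (n - 1 - i) + a * t ^ n := by
      simp [sum_range_succ', mul_sum, pow_succ', mul_assoc, Nat.sub_sub, add_comm 1]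
    simp [pow_succ' _ n, ih, corner_succ]

theorem corner_eq_of_commute_upperTriangular {R : Type*} [Ring R] {r t a b : R}
    (hrt : ∀ x, r * x = x * t → x = 0) (hcomm : Commute !![r, a; 0, t] !![r, b; 0, t]) :
    b = a := by
  have hcorner : r * b + a * t = r * a + b * t := by
    simpa [Matrix.mul_fin_two] using congr_fun₂ hcomm.eq 0 1
  refine sub_eq_zero.mp (hrt (b - a) ?_)
  rw [mul_sub, sub_mul, sub_eq_sub_iff_add_eq_add, hcorner, add_comm]

theorem stmt_4_general {R : Type*} [Ring R] (k : ℕ) (r t a : R)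
    (hr : r ^ (k + 1) = r) (ht : t ^ (k + 1) = t) (hrt : ∀ x, r * x = x * t → x = 0) :
    !![r, a; 0, t] ^ (k + 1) = !![r, a; 0, t] := by
  have hcomm := Commute.self_pow !![r, a; 0, t] (k + 1)
  rw [upperTriangular_fin_two_pow, hr, ht] at hcomm ⊢
  rw [corner_eq_of_commute_upperTriangular hrt hcomm]

/-- If `r^(k+1) = r`, `t^(k+1) = t` and `r ≠ t`, then the `2×2` upper triangular matrix
`!![r, a; 0, t]` is `(k+1)`-potent for every choice of `a`. -/
theorem stmt_4 {K : Type*} [Field K] (k : ℕ) (hk : 1 ≤ k) (r t a : K)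
    (hr : r ^ (k + 1) = r) (ht : t ^ (k + 1) = t) (hrt : r ≠ t) :
    (!![r, a; 0, t]) ^ (k + 1) = !![r, a; 0, t] :=
  stmt_4_general k r t a hr ht fun x hx =>
    (mul_eq_mul_right_iff.mp (hx.trans (mul_comm x t))).resolve_left hrt
end

section
/- Let K be a field, n and k natural numbers with k ≥ 1, and let r, t, x ∈ K with r^(k+1) = r, t^(k+1) = t and r ≠ t. Let a : Fin n → K be a row vector, b : Fin n → K a column vector, u an n×n matrix over K, and let A = [[r, a, x],[0, u, b],[0, 0, t]] be the corresponding (n+2)×(n+2) upper block triangular matrix. If the block matrices [[r, a],[0, u]] and [[u, b],[0, t]] are both (k+1)-potent, then A^(k+1) = A (for every value of the corner entry x). -/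
/-!
If a polynomial `p` annihilates the compressions of `A = [[r, a, x], [0, u, b], [0, 0, t]]` to the
first two and to the last two blocks, then only the corner block `d` of `p(A)` can be nonzero.
Since `p(A)` commutes with `A`, comparing the corners of `A * p(A)` and `p(A) * A` gives
`r * d = d * t`. This Sylvester equation has only the solution `d = 0` when `r` and `t` are
distinct scalars. Potency is the case `p = X ^ (k + 1) - X`.
-/

open Matrix Polynomial

section Intertwining

variable {R m n : Type*} [Semiring R] [Fintype m] [DecidableEq m] [Fintype n] [DecidableEq n]
  {A : Matrix m m R} {B : Matrix n n R} {J : Matrix m n R}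

theorem pow_mul_eq_mul_pow_of_mul_eq_mul (h : A * J = J * B) (i : ℕ) :
    A ^ i * J = J * B ^ i := by
  induction i with
  | zero => simp
  | succ i ih =>
    calc A ^ (i + 1) * J = A ^ i * J * B := by rw [pow_succ, Matrix.mul_assoc, h, Matrix.mul_assoc]
      _ = J * B ^ (i + 1) := by rw [ih, Matrix.mul_assoc, pow_succ]

theorem aeval_mul_eq_mul_aeval_of_mul_eq_mul {S : Type*} [CommSemiring S] [Algebra S R]
    (h : A * J = J * B) (p : S[X]) : aeval A p * J = J * aeval B p := by
  simp only [aeval_eq_sum_range, Matrix.sum_mul, Matrix.mul_sum, Matrix.smul_mul, Matrix.mul_smul,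
    pow_mul_eq_mul_pow_of_mul_eq_mul h]

end Intertwining

section Blocks

variable {R l m n : Type*}

/-- The block upper triangular matrix `[[r, a, x], [0, u, b], [0, 0, t]]`, with rows and columns
grouped as `l ⊕ (m ⊕ n)`. -/
def upperBlocks [Zero R] (r : Matrix l l R) (a : Matrix l m R) (x : Matrix l n R)
    (u : Matrix m m R) (b : Matrix m n R) (t : Matrix n n R) :
    Matrix (l ⊕ m ⊕ n) (l ⊕ m ⊕ n) R :=
  fromBlocks r (fromCols a x) 0 (fromBlocks u b 0 t)

/-- The block matrix `[[0, 0, d], [0, 0, 0], [0, 0, 0]]`, with rows and columns grouped as in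
`upperBlocks`. -/
def cornerBlock (m : Type*) [Zero R] (d : Matrix l n R) : Matrix (l ⊕ m ⊕ n) (l ⊕ m ⊕ n) R :=
  fromBlocks 0 (fromCols 0 d) 0 0

/-- The inclusion of the first two blocks `l ⊕ m` into `l ⊕ (m ⊕ n)`; multiplying by it on the
right deletes the last block column. -/
def initialIncl (R l m n : Type*) [Zero R] [One R] [DecidableEq l] [DecidableEq m] :
    Matrix (l ⊕ m ⊕ n) (l ⊕ m) R :=
  fromBlocks 1 0 0 (fromRows 1 0)

/-- The projection of `l ⊕ (m ⊕ n)` onto the last two blocks `m ⊕ n`; multiplying by it on the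
left deletes the first block row. -/
def finalProj (R l m n : Type*) [Zero R] [One R] [DecidableEq m] [DecidableEq n] :
    Matrix (m ⊕ n) (l ⊕ m ⊕ n) R :=
  fromCols 0 1

theorem cornerBlock_injective [Zero R] :
    Function.Injective (cornerBlock m : Matrix l n R → Matrix (l ⊕ m ⊕ n) (l ⊕ m ⊕ n) R) :=
  fun _ _ h => (fromCols_inj (fromBlocks_inj.1 h).2.1).2

variable [Semiring R]

theorem cornerBlock_zero : cornerBlock m (0 : Matrix l n R) = 0 := by
  simp [cornerBlock]

variable [Fintype l] [Fintype m] [Fintype n]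
  {r : Matrix l l R} {a : Matrix l m R} {x : Matrix l n R} {u : Matrix m m R}
  {b : Matrix m n R} {t : Matrix n n R}

theorem upperBlocks_mul_cornerBlock (d : Matrix l n R) :
    upperBlocks r a x u b t * cornerBlock m d = cornerBlock m (r * d) := by
  simp [upperBlocks, cornerBlock, fromBlocks_multiply, mul_fromCols]

theorem cornerBlock_mul_upperBlocks (d : Matrix l n R) :
    cornerBlock m d * upperBlocks r a x u b t = cornerBlock m (d * t) := by
  simp [upperBlocks, cornerBlock, fromBlocks_multiply, fromCols_mul_fromBlocks]

theorem upperBlocks_mul_initialIncl [DecidableEq l] [DecidableEq m] :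
    upperBlocks r a x u b t * initialIncl R l m n = initialIncl R l m n * fromBlocks r a 0 u := by
  simp [upperBlocks, initialIncl, fromBlocks_multiply, fromCols_mul_fromRows,
    fromBlocks_mul_fromRows, fromRows_mul]

theorem fromBlocks_mul_finalProj [DecidableEq m] [DecidableEq n] :
    fromBlocks u b 0 t * finalProj R l m n = finalProj R l m n * upperBlocks r a x u b t := by
  simp [upperBlocks, finalProj, mul_fromCols, fromCols_mul_fromBlocks]

variable [DecidableEq l] [DecidableEq m] [DecidableEq n]

theorem exists_eq_cornerBlock_of_mul_eq_zero {D : Matrix (l ⊕ m ⊕ n) (l ⊕ m ⊕ n) R}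
    (hI : D * initialIncl R l m n = 0) (hP : finalProj R l m n * D = 0) :
    ∃ d : Matrix l n R, D = cornerBlock m d := by
  rw [← fromBlocks_toBlocks D, ← fromCols_toCols D.toBlocks₁₂] at hI hP ⊢
  simp only [initialIncl, fromBlocks_multiply, fromCols_mul_fromRows, Matrix.mul_one,
    Matrix.mul_zero, add_zero, zero_add] at hI
  simp only [finalProj, fromCols_mul_fromBlocks, Matrix.one_mul, Matrix.zero_mul, zero_add] at hP
  obtain ⟨h₁₁, h₁₂, -, -⟩ := fromBlocks_inj.1 (hI.trans fromBlocks_zero.symm)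
  obtain ⟨h₂₁, h₂₂⟩ := fromCols_inj (hP.trans fromCols_zero.symm)
  exact ⟨D.toBlocks₁₂.toCols₂, by rw [h₁₁, h₁₂, h₂₁, h₂₂, cornerBlock]⟩

theorem stmt_6_general {S : Type*} [CommSemiring S] [Algebra S R] (p : S[X])
    (hrt : ∀ d : Matrix l n R, r * d = d * t → d = 0)
    (hru : aeval (fromBlocks r a 0 u) p = 0) (hut : aeval (fromBlocks u b 0 t) p = 0) :
    aeval (upperBlocks r a x u b t) p = 0 := by
  set A := upperBlocks r a x u b t with hA
  have hI : aeval A p * initialIncl R l m n = 0 := by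
    rw [aeval_mul_eq_mul_aeval_of_mul_eq_mul upperBlocks_mul_initialIncl, hru, Matrix.mul_zero]
  have hP : finalProj R l m n * aeval A p = 0 := by
    rw [← aeval_mul_eq_mul_aeval_of_mul_eq_mul fromBlocks_mul_finalProj, hut, Matrix.zero_mul]
  obtain ⟨d, hd⟩ := exists_eq_cornerBlock_of_mul_eq_zero hI hP
  have hcomm : A * aeval A p = aeval A p * A := by
    simpa only [aeval_X] using ((Commute.all X p).map (aeval A)).eq
  have hsylvester : r * d = d * t := by
    rw [hd, hA, upperBlocks_mul_cornerBlock, cornerBlock_mul_upperBlocks] at hcomm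
    exact cornerBlock_injective hcomm
  rw [hd, hrt d hsylvester, cornerBlock_zero]

end Blocks

theorem eq_zero_of_const_mul_eq_mul_const {R : Type*} [CommSemiring R] [IsCancelMulZero R]
    {r t : R} (hrt : r ≠ t) (d : Matrix Unit Unit R)
    (h : (of fun _ _ : Unit => r) * d = d * of fun _ _ : Unit => t) : d = 0 := by
  ext i j
  have hij : d i j * r = d i j * t := by
    simpa [Matrix.mul_apply, mul_comm r] using congrFun₂ h i j
  exact by_contra fun hd => hrt (mul_left_cancel₀ hd hij)

theorem aeval_X_pow_sub_X_eq_zero_iff {S R : Type*} [CommRing S] [Ring R] [Algebra S R]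
    (y : R) (i : ℕ) : aeval y (X ^ i - X : S[X]) = 0 ↔ y ^ i = y := by
  simp [sub_eq_zero]

/-- Let `r^(k+1) = r`, `t^(k+1) = t`, `r ≠ t`. If the block matrices `[[r, a], [0, u]]` and
`[[u, b], [0, t]]` are `(k+1)`-potent, then so is `A = [[r, a, x], [0, u, b], [0, 0, t]]`,
for every value of the corner entry `x`. -/
theorem stmt_6 {K : Type*} [Field K] (n k : ℕ) (hk : 1 ≤ k) (r t x : K)
    (hr : r ^ (k + 1) = r) (ht : t ^ (k + 1) = t) (hrt : r ≠ t)
    (a : Fin n → K) (b : Fin n → K) (u : Matrix (Fin n) (Fin n) K)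
    (hru : (Matrix.fromBlocks (Matrix.of fun (_ _ : Unit) => r)
        (Matrix.of fun (_ : Unit) j => a j) 0 u) ^ (k + 1)
      = Matrix.fromBlocks (Matrix.of fun (_ _ : Unit) => r)
        (Matrix.of fun (_ : Unit) j => a j) 0 u)
    (hut : (Matrix.fromBlocks u (Matrix.of fun i (_ : Unit) => b i)
        0 (Matrix.of fun (_ _ : Unit) => t)) ^ (k + 1)
      = Matrix.fromBlocks u (Matrix.of fun i (_ : Unit) => b i)
        0 (Matrix.of fun (_ _ : Unit) => t)) :
    (Matrix.fromBlocks (Matrix.of fun (_ _ : Unit) => r)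
        (Matrix.of fun (_ : Unit) j => Sum.elim a (fun (_ : Unit) => x) j) 0
        (Matrix.fromBlocks u (Matrix.of fun i (_ : Unit) => b i) 0
          (Matrix.of fun (_ _ : Unit) => t))) ^ (k + 1)
      = Matrix.fromBlocks (Matrix.of fun (_ _ : Unit) => r)
        (Matrix.of fun (_ : Unit) j => Sum.elim a (fun (_ : Unit) => x) j) 0
        (Matrix.fromBlocks u (Matrix.of fun i (_ : Unit) => b i) 0
          (Matrix.of fun (_ _ : Unit) => t)) := by
  simp only [← aeval_X_pow_sub_X_eq_zero_iff (S := K)] at hru hut ⊢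
  exact stmt_6_general _ (eq_zero_of_const_mul_eq_mul_const hrt) hru hut
end

section
/- Let K be a finite field with q elements whose characteristic divides neither k nor k+1, where k ≥ 1 is a natural number, and let ω ∈ K be a kth root of unity such that the k+1 elements 0, 1, ω, ω², …, ω^(k−1) are pairwise distinct. Then for every n, the number of n×n upper triangular matrices A over K satisfying A^(k+1) = A and having every diagonal entry in the set D = {0, 1, ω, …, ω^(k−1)} equals Σ_{(n₀,n₁,…,n_k)} (n! / (n₀!·n₁!⋯n_k!)) · q^(Σ_{0 ≤ i < j ≤ k} n_i·n_j), where the sum ranges over all tuples of natural numbers (n₀, …, n_k) with n₀ + n₁ + ⋯ + n_k = n. -/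
/-!
Fix distinct scalars `v i` and a colouring `c` of the indices. An upper triangular matrix `A` with
diagonal `v ∘ c` annihilated by `∏ i, (X - v i)` is diagonalizable, so `A = U * D * U⁻¹` with `D =
diagonal (v ∘ c)`. Choosing each row of `U⁻¹` from the matching spectral projection of `A` makes
`U` upper triangular with unit diagonal and makes its other entries joining indices of equal colour
vanish. Since `U` is determined up to right multiplication by the centralizer of `D`, there is only
one such `U`. Its entries `U i j` with `i < j` and `c i ≠ c j` are free, and their number depends
only on the sizes `n_a` of the colour classes: it is `∑_{a < b} n_a * n_b`, because each pair of
indices of different colours can be ordered by colour instead of by position. Summing over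
colourings produces the multinomial coefficients. For the potent matrices, `∏ i, (X - v i) = X ^ (k
+ 1) - X`.
-/

open Polynomial Finset Matrix Function

section Colourings

variable {ι α : Type*} [Fintype ι]

-- Both sides are the coefficient of `∏ a, X a ^ w a` in `(∑ a, X a) ^ card ι`.
lemma card_filter_card_fiber_eq_multinomial [DecidableEq ι] [Fintype α] [DecidableEq α]
    {w : α → ℕ}
    (hw : w ∈ piAntidiag univ (Fintype.card ι)) :
    #{f : ι → α | (fun a ↦ #{x | f x = a}) = w} = Nat.multinomial univ w := by
  let mon (u : α → ℕ) : MvPolynomial α ℕ :=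
    MvPolynomial.monomial (Finsupp.equivFunOnFinite.symm u) 1
  have prod_pow_eq (u : α → ℕ) : ∏ a, (MvPolynomial.X a : MvPolynomial α ℕ) ^ u a = mon u := by
    simp [mon, MvPolynomial.monomial_eq, Finsupp.prod_fintype]
  have prod_comp_eq (f : ι → α) :
      ∏ x, (MvPolynomial.X (f x) : MvPolynomial α ℕ) = mon fun a ↦ #{x | f x = a} := by
    rw [← prod_pow_eq, ← prod_fiberwise' univ f]
    simp only [prod_const]
  have expansions : ∑ f : ι → α, mon (fun a ↦ #{x | f x = a}) =
      ∑ u ∈ piAntidiag univ (Fintype.card ι), Nat.multinomial univ u • mon u := by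
    simp_rw [← prod_comp_eq, ← prod_pow_eq, nsmul_eq_mul]
    rw [← sum_pow_eq_sum_piAntidiag, ← card_univ, ← prod_const, prod_univ_sum,
      Fintype.piFinset_univ]
  have coeffs := congrArg (MvPolynomial.coeff (Finsupp.equivFunOnFinite.symm w)) expansions
  simpa [mon, MvPolynomial.coeff_sum, MvPolynomial.coeff_smul, MvPolynomial.coeff_monomial, hw,
    ← card_filter, -nsmul_eq_mul] using coeffs

lemma sum_card_fiber_eq_sum_multinomial_nsmul [DecidableEq ι] [Fintype α] [DecidableEq α]
    {M : Type*} [AddCommMonoid M] (F : (α → ℕ) → M) :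
    ∑ f : ι → α, F (fun a ↦ #{x | f x = a}) =
      ∑ w ∈ piAntidiag univ (Fintype.card ι), Nat.multinomial univ w • F w := by
  have hmaps (f : ι → α) : (fun a ↦ #{x | f x = a}) ∈ piAntidiag univ (Fintype.card ι) := by
    simp [← card_eq_sum_card_fiberwise]
  rw [← sum_fiberwise_of_maps_to fun f _ ↦ hmaps f]
  refine sum_congr rfl fun w hw ↦ ?_
  rw [← card_filter_card_fiber_eq_multinomial hw, ← sum_const]
  exact sum_congr rfl fun f hf ↦ congrArg F (mem_filter.1 hf).2

-- Match each pair of different colours, listed by position, with the same pair listed by colour.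
lemma card_lt_and_ne_eq_card_apply_lt [LinearOrder ι] [LinearOrder α] (f : ι → α) :
    #{p : ι × ι | p.1 < p.2 ∧ f p.1 ≠ f p.2} = #{p : ι × ι | f p.1 < f p.2} := by
  refine card_bij' (fun p _ ↦ if f p.1 < f p.2 then p else p.swap)
    (fun p _ ↦ if p.1 < p.2 then p else p.swap) ?_ ?_ ?_ ?_ <;> grind

lemma card_apply_lt_eq_sum_card_fiber_mul [Fintype α] [LinearOrder α]
    [LocallyFiniteOrderTop α] (f : ι → α) :
    #{p : ι × ι | f p.1 < f p.2} = ∑ a, ∑ b ∈ Ioi a, #{x | f x = a} * #{x | f x = b} := by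
  simp_rw [← card_product, sum_sigma' univ (fun a ↦ Ioi a)]
  rw [← card_sigma]
  refine card_bij' (fun p _ ↦ ⟨⟨f p.1, f p.2⟩, p⟩) (fun p _ ↦ p.2) ?_ ?_ ?_ ?_ <;>
    simp +contextual

end Colourings

section Polynomials

lemma semiconjBy_aeval {R A : Type*} [CommSemiring R] [Semiring A] [Algebra R A] {u a b : A}
    (h : SemiconjBy u a b) (p : R[X]) : SemiconjBy u (aeval a p) (aeval b p) := by
  induction p using Polynomial.induction_on' with
  | add p q hp hq => simpa only [map_add] using hp.add_right hq
  | monomial n r =>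
    simp only [aeval_monomial]
    exact SemiconjBy.mul_right (Algebra.commutes r u).symm (h.pow_right n)

lemma X_sub_C_mul_lagrangeBasis {ι K : Type*} [DecidableEq ι] [Field K] {s : Finset ι} (v : ι → K)
    {i : ι} (hi : i ∈ s) :
    (X - C (v i)) * Lagrange.basis s v i =
      C (Lagrange.nodalWeight s v i) * Lagrange.nodal s v := by
  rw [Lagrange.basis_eq_prod_sub_inv_mul_nodal_div hi, ← Lagrange.nodal_erase_eq_nodal_div hi,
    mul_left_comm, ← Lagrange.nodal_eq_mul_nodal_erase hi]

lemma aeval_lagrangeBasis_mul_self {ι K A : Type*} [DecidableEq ι] [Field K] [Ring A] [Algebra K A]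
    {s : Finset ι} {v : ι → K} {a : A} (ha : aeval a (Lagrange.nodal s v) = 0) {i : ι}
    (hi : i ∈ s) :
    aeval a (Lagrange.basis s v i) * a = v i • aeval a (Lagrange.basis s v i) := by
  have h := congrArg (aeval a) (X_sub_C_mul_lagrangeBasis v hi)
  rw [mul_comm, map_mul, map_mul, ha, mul_zero, map_sub, aeval_X, aeval_C, mul_sub,
    sub_eq_zero] at h
  rw [h, ← Algebra.commutes, Algebra.smul_def]

lemma nodal_eq_X_pow_succ_sub_X {ι R : Type*} [CommRing R] [IsDomain R] {s : Finset ι} {v : ι → R}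
    (hv : Set.InjOn v s) {k : ℕ} (hk : 1 ≤ k) (hcard : #s = k + 1)
    (hpow : ∀ i ∈ s, v i ^ (k + 1) = v i) :
    Lagrange.nodal s v = X ^ (k + 1) - X := by
  have hdeg : (X : R[X]).degree < (X ^ (k + 1) : R[X]).degree := by
    rw [degree_X, degree_X_pow]
    exact_mod_cast Nat.lt_succ_of_le hk
  have hmonic : (X ^ (k + 1) - X : R[X]).Monic := (monic_X_pow _).sub_of_left hdeg
  have hdeg_sub : (X ^ (k + 1) - X : R[X]).degree = #s := by
    rw [degree_sub_eq_left_of_degree_lt hdeg, degree_X_pow, hcard]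
  refine eq_of_degree_le_of_eval_index_eq s hv Lagrange.degree_nodal.le
    (Lagrange.degree_nodal.trans hdeg_sub.symm) ?_ fun i hi ↦ ?_
  · rw [Lagrange.nodal_monic.leadingCoeff, hmonic.leadingCoeff]
  · rw [Lagrange.eval_nodal_at_node hi, eval_sub, eval_pow, eval_X, hpow i hi, sub_self]

end Polynomials

section TriangularMatrices

variable {m R : Type*} [Fintype m]

lemma aeval_diagonal [DecidableEq m] [CommSemiring R] (d : m → R) (p : R[X]) :
    aeval (diagonal d) p = diagonal fun i ↦ p.eval (d i) := by
  have h := aeval_algHom_apply (diagonalAlgHom R (n := m) (α := R)) d p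
  rw [diagonalAlgHom_apply] at h
  rw [h, diagonalAlgHom_apply]
  congr! 1 with i
  ext i
  simp [aeval_pi]

lemma apply_eq_zero_of_commute_diagonal [DecidableEq m] [CommRing R] [NoZeroDivisors R]
    {d : m → R} {V : Matrix m m R} (h : Commute V (diagonal d)) {i j : m} (hij : d i ≠ d j) :
    V i j = 0 := by
  have hentry := congrFun₂ h.eq i j
  rw [mul_diagonal, diagonal_mul, mul_comm, ← sub_eq_zero, ← sub_mul] at hentry
  exact (mul_eq_zero.1 hentry).resolve_left (sub_ne_zero.2 hij.symm)

variable [LinearOrder m]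

lemma mul_apply_self_of_isUpperTriangular [NonUnitalNonAssocSemiring R] {A B : Matrix m m R}
    (hA : A.IsUpperTriangular) (hB : B.IsUpperTriangular) (i : m) :
    (A * B) i i = A i i * B i i := by
  rw [mul_apply, sum_eq_single i _ (by simp)]
  intro j _ hj
  rcases lt_or_gt_of_ne hj with hji | hij
  · rw [hA hji, zero_mul]
  · rw [hB hij, mul_zero]

variable [CommRing R]

lemma isUpperTriangular_aeval {A : Matrix m m R} (hA : A.IsUpperTriangular) (p : R[X]) :
    (aeval A p).IsUpperTriangular :=
  Algebra.adjoin_le (S := blockTriangularSubalgebra R R id) (by simpa using hA)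
    (aeval_mem_adjoin_singleton R A)

lemma aeval_apply_self_of_isUpperTriangular {A : Matrix m m R} (hA : A.IsUpperTriangular)
    (p : R[X]) (i : m) : aeval A p i i = p.eval (A i i) := by
  induction p using Polynomial.induction_on with
  | C r => simp [algebraMap_matrix_apply]
  | add p q hp hq => simp [hp, hq]
  | monomial n r h =>
    rw [pow_succ, ← mul_assoc, map_mul, aeval_X,
      mul_apply_self_of_isUpperTriangular (isUpperTriangular_aeval hA _) hA, h, eval_mul_X]

lemma isUpperTriangular_inv {A : Matrix m m R} (hA : A.IsUpperTriangular) (hunit : IsUnit A) :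
    A⁻¹.IsUpperTriangular :=
  have := hunit.invertible
  blockTriangular_inv_of_blockTriangular hA

lemma isUnit_of_isUpperTriangular_of_apply_self_eq_one {A : Matrix m m R}
    (hA : A.IsUpperTriangular) (hdiag : ∀ i, A i i = 1) : IsUnit A := by
  simp [isUnit_iff_isUnit_det, det_of_isUpperTriangular hA, hdiag]

end TriangularMatrices

/-- Upper unitriangular matrices whose only nonzero off-diagonal entries join indices on which the
colouring `c` takes different values. They are the normalized change of basis matrices
diagonalizing an upper triangular matrix with diagonal `c`. -/
structure IsUnitriangularFor {m α R : Type*} [LinearOrder m] [Zero R] [One R] (c : m → α)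
    (U : Matrix m m R) : Prop where
  isUpperTriangular : U.IsUpperTriangular
  apply_eq_one_apply : ∀ ⦃i j⦄, c i = c j → U i j = (1 : Matrix m m R) i j

namespace IsUnitriangularFor

variable {m α R : Type*} [LinearOrder m]

lemma iff_forall_apply_eq_one_apply [Zero R] [One R] {c : m → α} {U : Matrix m m R} :
    IsUnitriangularFor c U ↔
      ∀ i j, ¬(i < j ∧ c i ≠ c j) → U i j = (1 : Matrix m m R) i j := by
  refine ⟨fun hU i j hij ↦ ?_, fun h ↦ ⟨fun i j hji ↦ ?_, fun i j hij ↦ h i j (by simp [hij])⟩⟩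
  · by_cases hc : c i = c j
    · exact hU.apply_eq_one_apply hc
    · have hji : j < i := by grind
      rw [hU.isUpperTriangular hji, one_apply_ne hji.ne']
  · have hji : j < i := hji
    rw [h i j fun hij ↦ hij.1.not_gt hji, one_apply_ne hji.ne']

lemma apply_self [Zero R] [One R] {c : m → α} {U : Matrix m m R} (hU : IsUnitriangularFor c U)
    (i : m) : U i i = 1 := by
  rw [hU.apply_eq_one_apply rfl, one_apply_eq]

variable [Fintype m]

lemma natCard_eq_pow [DecidableEq α] [Zero R] [One R] (c : m → α) :
    Nat.card {U : Matrix m m R // IsUnitriangularFor c U} =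
      Nat.card R ^ #{p : m × m | p.1 < p.2 ∧ c p.1 ≠ c p.2} := by
  let fixed (p : m × m) : Prop := ¬(p.1 < p.2 ∧ c p.1 ≠ c p.2)
  let e : {U : Matrix m m R // IsUnitriangularFor c U} ≃ ({p // ¬fixed p} → R) :=
    ((Equiv.curry m m R).symm.subtypeEquiv fun (U : Matrix m m R) ↦ by
      rw [iff_forall_apply_eq_one_apply]
      simp [fixed, funext_iff, uncurry]).trans
    (Equiv.subtypePreimage fixed fun p ↦ (1 : Matrix m m R) p.1.1 p.1.2)
  simp only [Nat.card_congr e, Nat.card_fun, fixed, not_not, Nat.card_eq_fintype_card,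
    Fintype.card_subtype]

variable [CommRing R]

lemma isUnit {c : m → α} {U : Matrix m m R} (hU : IsUnitriangularFor c U) : IsUnit U :=
  isUnit_of_isUpperTriangular_of_apply_self_eq_one hU.isUpperTriangular hU.apply_self

variable [NoZeroDivisors R] {d : m → R} {A U V : Matrix m m R}

lemma eq_one_of_mul (hU : IsUnitriangularFor d U) (hUV : IsUnitriangularFor d (U * V))
    (hV : Commute V (diagonal d)) : V = 1 := by
  ext i j
  by_cases hij : d i = d j
  · rw [← hUV.apply_eq_one_apply hij, mul_apply, sum_eq_single i, hU.apply_self, one_mul]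
    · intro l _ hl
      by_cases hlj : d l = d j
      · rw [hU.apply_eq_one_apply (hij.trans hlj.symm), one_apply_ne hl.symm, zero_mul]
      · rw [apply_eq_zero_of_commute_diagonal hV hlj, mul_zero]
    · simp
  · rw [apply_eq_zero_of_commute_diagonal hV hij, one_apply_ne fun h ↦ hij (congrArg d h)]

lemma eq_of_semiconjBy (hU : IsUnitriangularFor d U) (hV : IsUnitriangularFor d V)
    (hUA : SemiconjBy U (diagonal d) A) (hVA : SemiconjBy V (diagonal d) A) : U = V := by
  obtain ⟨u, rfl⟩ := hU.isUnit
  have hmul : (u : Matrix m m R) * ((↑u⁻¹ : Matrix m m R) * V) = V :=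
    u.mul_inv_cancel_left V
  have hone : (↑u⁻¹ : Matrix m m R) * V = 1 :=
    hU.eq_one_of_mul (hmul.symm ▸ hV) (hUA.units_inv_symm_left.mul_left hVA)
  rw [← hmul, hone, mul_one]

end IsUnitriangularFor

section Conjugates

variable {m R : Type*} [Fintype m] [CommRing R]

lemma semiconjBy_mul_mul_inv [DecidableEq m] {U : Matrix m m R} (hU : IsUnit U)
    (B : Matrix m m R) : SemiconjBy U B (U * B * U⁻¹) := by
  obtain ⟨u, rfl⟩ := hU
  simpa only [coe_units_inv] using u.mk_semiconjBy B

lemma semiconjBy_inv [DecidableEq m] {U A B : Matrix m m R} (hU : IsUnit U)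
    (h : SemiconjBy U A B) : SemiconjBy U⁻¹ B A := by
  obtain ⟨u, rfl⟩ := hU
  simpa only [coe_units_inv] using h.units_inv_symm_left

lemma aeval_mul_diagonal_mul_inv_eq_zero [DecidableEq m] {d : m → R} {U : Matrix m m R}
    (hU : IsUnit U) {p : R[X]} (hp : ∀ i, p.eval (d i) = 0) :
    aeval (U * diagonal d * U⁻¹) p = 0 := by
  have h := (semiconjBy_aeval (semiconjBy_mul_mul_inv hU (diagonal d)) p).eq
  rw [aeval_diagonal, funext hp, diagonal_zero, mul_zero] at h
  exact hU.mul_left_eq_zero.1 h.symm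

variable [LinearOrder m] {U : Matrix m m R}

lemma isUpperTriangular_mul_diagonal_mul_inv (hU : U.IsUpperTriangular) (hunit : IsUnit U)
    (d : m → R) : (U * diagonal d * U⁻¹).IsUpperTriangular :=
  (hU.mul (blockTriangular_diagonal d)).mul (isUpperTriangular_inv hU hunit)

lemma mul_diagonal_mul_inv_apply_self (hU : U.IsUpperTriangular) (hdiag : ∀ i, U i i = 1)
    (d : m → R) (i : m) : (U * diagonal d * U⁻¹) i i = d i := by
  have hunit := isUnit_of_isUpperTriangular_of_apply_self_eq_one hU hdiag
  have h := congrFun₂ (semiconjBy_mul_mul_inv hunit (diagonal d)).eq i i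
  rwa [mul_diagonal, mul_apply_self_of_isUpperTriangular
    (isUpperTriangular_mul_diagonal_mul_inv hU hunit d) hU, hdiag, one_mul, mul_one, eq_comm] at h

end Conjugates

section Diagonalization

variable {ι m K : Type*} [Fintype ι] [Fintype m] [LinearOrder m] [Field K] {v : ι → K}
  {c : m → ι} {A : Matrix m m K}

/-- The matrix whose `i`-th row is the `i`-th row of the Lagrange basis polynomial of the node
`v (c i)` evaluated at `A`. When `A` is annihilated by `∏ i, (X - v i)`, that polynomial in `A` is
the spectral projection for `v (c i)`, so the rows are left eigenvectors of `A`. -/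
noncomputable def spectralRows [DecidableEq ι] (v : ι → K) (c : m → ι) (A : Matrix m m K) :
    Matrix m m K :=
  of fun i ↦ aeval A (Lagrange.basis univ v (c i)) i

lemma spectralRows_mul_apply [DecidableEq ι] (v : ι → K) (c : m → ι) (A M : Matrix m m K)
    (i j : m) :
    (spectralRows v c A * M) i j = (aeval A (Lagrange.basis univ v (c i)) * M) i j :=
  rfl

lemma semiconjBy_spectralRows [DecidableEq ι] (hnodal : aeval A (Lagrange.nodal univ v) = 0) :
    SemiconjBy (spectralRows v c A) A (diagonal (v ∘ c)) := by
  ext i j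
  rw [spectralRows_mul_apply, aeval_lagrangeBasis_mul_self hnodal (mem_univ _), diagonal_mul]
  rfl

lemma isUpperTriangular_spectralRows [DecidableEq ι] (hA : A.IsUpperTriangular) :
    (spectralRows v c A).IsUpperTriangular :=
  fun _ _ hij ↦ isUpperTriangular_aeval hA _ hij

lemma isUnit_spectralRows [DecidableEq ι] (hv : Injective v) (hA : A.IsUpperTriangular)
    (hdiag : ∀ i, A i i = v (c i)) : IsUnit (spectralRows v c A) := by
  refine isUnit_of_isUpperTriangular_of_apply_self_eq_one (isUpperTriangular_spectralRows hA)
    fun i ↦ ?_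
  rw [spectralRows, of_apply, aeval_apply_self_of_isUpperTriangular hA, hdiag,
    Lagrange.eval_basis_self hv.injOn (mem_univ _)]

lemma isUnitriangularFor_inv_spectralRows [DecidableEq ι] (hv : Injective v)
    (hA : A.IsUpperTriangular) (hnodal : aeval A (Lagrange.nodal univ v) = 0)
    (hdiag : ∀ i, A i i = v (c i)) : IsUnitriangularFor (v ∘ c) (spectralRows v c A)⁻¹ := by
  have hunit := isUnit_spectralRows hv hA hdiag
  have hsemi := semiconjBy_inv hunit (semiconjBy_spectralRows hnodal)
  refine ⟨isUpperTriangular_inv (isUpperTriangular_spectralRows hA) hunit, fun i j hij ↦ ?_⟩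
  set p := Lagrange.basis univ v (c i)
  have heval : p.eval ((v ∘ c) j) = 1 := by
    rw [← hij, Function.comp_apply, Lagrange.eval_basis_self hv.injOn (mem_univ _)]
  calc (spectralRows v c A)⁻¹ i j
      = ((spectralRows v c A)⁻¹ * aeval (diagonal (v ∘ c)) p) i j := by
        rw [aeval_diagonal, mul_diagonal, heval, mul_one]
    _ = (aeval A p * (spectralRows v c A)⁻¹) i j := by rw [(semiconjBy_aeval hsemi p).eq]
    _ = (1 : Matrix m m K) i j := by
        rw [← spectralRows_mul_apply, mul_nonsing_inv _ ((isUnit_iff_isUnit_det _).1 hunit)]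

lemma exists_isUnitriangularFor_mul_diagonal_mul_inv_eq (hv : Injective v)
    (hA : A.IsUpperTriangular) (hnodal : aeval A (Lagrange.nodal univ v) = 0)
    (hdiag : ∀ i, A i i = v (c i)) :
    ∃ U, IsUnitriangularFor (v ∘ c) U ∧ U * diagonal (v ∘ c) * U⁻¹ = A := by
  classical
  have hU := isUnitriangularFor_inv_spectralRows hv hA hnodal hdiag
  have hsemi := semiconjBy_inv (isUnit_spectralRows hv hA hdiag) (semiconjBy_spectralRows hnodal)
  refine ⟨_, hU, ?_⟩
  rw [hsemi.eq, mul_nonsing_inv_cancel_right _ _ ((isUnit_iff_isUnit_det _).1 hU.isUnit)]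

lemma exists_apply_self_eq_of_aeval_nodal_eq_zero (hA : A.IsUpperTriangular)
    (hnodal : aeval A (Lagrange.nodal univ v) = 0) (i : m) : ∃ a, A i i = v a := by
  have h : ∏ a, (A i i - v a) = 0 := by
    rw [← Lagrange.eval_nodal, ← aeval_apply_self_of_isUpperTriangular hA, hnodal,
      Matrix.zero_apply]
  simpa only [prod_eq_zero_iff, mem_univ, true_and, sub_eq_zero] using h

end Diagonalization

section Counting

variable {ι m K : Type*} [Fintype ι] [Fintype m] [LinearOrder m] [Field K] {v : ι → K}

lemma natCard_aeval_nodal_eq_zero_of_diag [DecidableEq ι] (hv : Injective v) (c : m → ι) :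
    Nat.card {A : Matrix m m K // (A.IsUpperTriangular ∧ aeval A (Lagrange.nodal univ v) = 0) ∧
        ∀ i, A i i = v (c i)} =
      Nat.card K ^ #{p : m × m | p.1 < p.2 ∧ c p.1 ≠ c p.2} := by
  classical
  have hcount := IsUnitriangularFor.natCard_eq_pow (R := K) (v ∘ c)
  simp only [Function.comp_apply, hv.ne_iff] at hcount
  have hroot (i : m) : (Lagrange.nodal univ v).eval ((v ∘ c) i) = 0 :=
    Lagrange.eval_nodal_at_node (mem_univ (c i))
  let conj (U : {U : Matrix m m K // IsUnitriangularFor (v ∘ c) U}) :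
      {A : Matrix m m K // (A.IsUpperTriangular ∧ aeval A (Lagrange.nodal univ v) = 0) ∧
        ∀ i, A i i = v (c i)} :=
    ⟨U.1 * diagonal (v ∘ c) * U.1⁻¹,
      ⟨isUpperTriangular_mul_diagonal_mul_inv U.2.isUpperTriangular U.2.isUnit _,
        aeval_mul_diagonal_mul_inv_eq_zero U.2.isUnit hroot⟩,
      mul_diagonal_mul_inv_apply_self U.2.isUpperTriangular U.2.apply_self _⟩
  have hinj : Injective conj := fun U V hUV ↦ by
    have heq : U.1 * diagonal (v ∘ c) * U.1⁻¹ = V.1 * diagonal (v ∘ c) * V.1⁻¹ :=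
      congrArg Subtype.val hUV
    exact Subtype.ext <| U.2.eq_of_semiconjBy V.2 (semiconjBy_mul_mul_inv U.2.isUnit _)
      (heq ▸ semiconjBy_mul_mul_inv V.2.isUnit _)
  have hsurj : Surjective conj := fun ⟨A, ⟨hA, hnodal⟩, hdiag⟩ ↦ by
    obtain ⟨U, hU, rfl⟩ := exists_isUnitriangularFor_mul_diagonal_mul_inv_eq hv hA hnodal hdiag
    exact ⟨⟨U, hU⟩, rfl⟩
  rw [← hcount, Nat.card_eq_of_bijective conj ⟨hinj, hsurj⟩]

lemma natCard_aeval_nodal_eq_zero_eq_sum_diag [Finite K] (hv : Injective v) :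
    Nat.card {A : Matrix m m K // A.IsUpperTriangular ∧ aeval A (Lagrange.nodal univ v) = 0} =
      ∑ c : m → ι, Nat.card {A : Matrix m m K //
        (A.IsUpperTriangular ∧ aeval A (Lagrange.nodal univ v) = 0) ∧ ∀ i, A i i = v (c i)} := by
  rw [← Nat.card_sigma]
  symm
  refine Nat.card_eq_of_bijective (fun x ↦ ⟨x.2.1, x.2.2.1⟩) ⟨?_, fun ⟨A, hA⟩ ↦ ?_⟩
  · rintro ⟨c, A, hA, hc⟩ ⟨c', A', hA', hc'⟩ h
    obtain rfl : A = A' := congrArg Subtype.val h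
    exact Sigma.subtype_ext (funext fun i ↦ hv ((hc i).symm.trans (hc' i))) rfl
  · choose c hc using exists_apply_self_eq_of_aeval_nodal_eq_zero hA.1 hA.2
    exact ⟨⟨c, A, hA, hc⟩, rfl⟩

-- `w a` is the multiplicity of `v a` on the diagonal.
theorem stmt_9_general [Finite K] [LinearOrder ι] [LocallyFiniteOrderTop ι] (hv : Injective v) :
    Nat.card {A : Matrix m m K // A.IsUpperTriangular ∧ aeval A (Lagrange.nodal univ v) = 0} =
      ∑ w ∈ piAntidiag univ (Fintype.card m),
        Nat.multinomial univ w * Nat.card K ^ ∑ a : ι, ∑ b ∈ Ioi a, w a * w b := by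
  simp_rw [natCard_aeval_nodal_eq_zero_eq_sum_diag hv, natCard_aeval_nodal_eq_zero_of_diag hv,
    card_lt_and_ne_eq_card_apply_lt, card_apply_lt_eq_sum_card_fiber_mul]
  exact sum_card_fiber_eq_sum_multinomial_nsmul fun w : ι → ℕ ↦
    Nat.card K ^ ∑ a, ∑ b ∈ Ioi a, w a * w b

end Counting

section PotentMatrices

lemma potent_iff_aeval_nodal_eq_zero {ι m K : Type*} [Fintype ι] [Fintype m] [LinearOrder m]
    [Field K] [DecidableEq K] {v : ι → K} (hv : Injective v) {k : ℕ} (hk : 1 ≤ k)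
    (hcard : Fintype.card ι = k + 1) (hpow : ∀ a, v a ^ (k + 1) = v a) {A : Matrix m m K} :
    (A ^ (k + 1) = A ∧ (∀ i j, j < i → A i j = 0) ∧ ∀ i, A i i ∈ univ.image v) ↔
      A.IsUpperTriangular ∧ aeval A (Lagrange.nodal univ v) = 0 := by
  have hroot : aeval A (Lagrange.nodal univ v) = 0 ↔ A ^ (k + 1) = A := by
    rw [nodal_eq_X_pow_succ_sub_X hv.injOn hk hcard fun a _ ↦ hpow a, map_sub, map_pow, aeval_X,
      sub_eq_zero]
  refine ⟨fun ⟨hA, hup, _⟩ ↦ ⟨fun i j ↦ hup i j, hroot.2 hA⟩, fun ⟨hup, hA⟩ ↦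
    ⟨hroot.1 hA, fun i j hij ↦ hup hij, fun i ↦ ?_⟩⟩
  obtain ⟨a, ha⟩ := exists_apply_self_eq_of_aeval_nodal_eq_zero hup hA i
  exact ha ▸ mem_image_of_mem v (mem_univ a)

/-- The sequence `0, 1, ω, …, ω ^ (k - 1)`, used as an enumeration of the possible diagonal entries
of a potent triangular matrix. -/
def zeroConsPowers {M : Type*} [MonoidWithZero M] (ω : M) (k : ℕ) : Fin (k + 1) → M :=
  Fin.cons 0 fun i ↦ ω ^ (i : ℕ)

lemma image_zeroConsPowers {M : Type*} [MonoidWithZero M] [DecidableEq M] (ω : M) (k : ℕ) :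
    univ.image (zeroConsPowers ω k) = insert 0 ((range k).image fun i ↦ ω ^ i) := by
  ext x
  simp [zeroConsPowers, Fin.exists_fin_succ, Fin.exists_iff, eq_comm]

lemma zeroConsPowers_pow_succ {M : Type*} [MonoidWithZero M] {ω : M} {k : ℕ} (hω : ω ^ k = 1)
    (a : Fin (k + 1)) : zeroConsPowers ω k a ^ (k + 1) = zeroConsPowers ω k a := by
  refine Fin.cases (by simp [zeroConsPowers]) (fun i ↦ ?_) a
  rw [zeroConsPowers, Fin.cons_succ, pow_succ, pow_right_comm, hω, one_pow, one_mul]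

end PotentMatrices

/-- Counting `(k+1)`-potent upper triangular `n×n` matrices with diagonal entries in
`D = {0, 1, ω, …, ω^(k-1)}` over a finite field `K` with `q` elements: their number is
`∑_{n₀+⋯+n_k = n} (n! / (n₀!⋯n_k!)) · q^(∑_{i<j} n_i n_j)`. -/
theorem stmt_9 {K : Type*} [Field K] [Fintype K] [DecidableEq K] (q k n : ℕ)
    (hq : Fintype.card K = q) (hk : 1 ≤ k)
    (hchar_k : (k : K) ≠ 0) (hchar_k1 : ((k + 1 : ℕ) : K) ≠ 0)
    (ω : K) (hω : ω ^ k = 1)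
    (hdist : (insert (0 : K) ((Finset.range k).image (fun m => ω ^ m))).card = k + 1) :
    Nat.card {A : Matrix (Fin n) (Fin n) K //
        A ^ (k + 1) = A ∧ (∀ i j : Fin n, j < i → A i j = 0) ∧
        ∀ i : Fin n, A i i ∈ insert (0 : K) ((Finset.range k).image (fun m => ω ^ m))}
      = ∑ v ∈ Finset.Nat.antidiagonalTuple (k + 1) n,
          Nat.multinomial Finset.univ v *
            q ^ (∑ i : Fin (k + 1), ∑ j ∈ Finset.Ioi i, v i * v j) := by
  subst hq
  rw [← image_zeroConsPowers] at hdist ⊢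
  have hinj : Injective (zeroConsPowers ω k) := by
    simpa using card_image_iff.1 (hdist.trans (Finset.card_fin _).symm)
  simpa only [potent_iff_aeval_nodal_eq_zero hinj hk (Fintype.card_fin _)
      (zeroConsPowers_pow_succ hω), Fintype.card_fin, Nat.card_eq_fintype_card,
    piAntidiag_univ_fin_eq_antidiagonalTuple]
    using stmt_9_general (m := Fin n) hinj
end

section
/- Let K be a finite field with q elements whose characteristic divides neither k nor k+1, where k ≥ 1 is a natural number, and let s be the number of elements x ∈ K satisfying x^(k+1) = x. Then for every n, the total number of n×n upper triangular matrices A over K with A^(k+1) = A equals Σ_{(n₁,…,n_s)} (n! / (n₁!⋯n_s!)) · q^(Σ_{1 ≤ i < j ≤ s} n_i·n_j), where the sum ranges over all tuples of natural numbers (n₁, …, n_s) with n₁ + ⋯ + n_s = n. -/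
/-!
The argument works for the zeros of any separable polynomial `P` among the upper triangular matrices
over `K`, here `P = X ^ (k + 1) - X`. Deleting the first row and column of such a matrix leaves a
smaller one, `A`, and `P` vanishes on the block matrix `[[a, b], [0, A]]` if and only if `P a = 0`,
`P A = 0` and `b * Q A = 0`, where `Q = P / (X - a)`. As `P` is separable, `A` is semisimple, so the
rank of `Q A` is the multiplicity of `a` on the diagonal of `A`, and `b` ranges over a space whose
dimension is the number of diagonal entries of `A` other than `a`. By induction, the zeros of `P`
with diagonal `d` number `q ^ #{(i, j) | i < j, d i ≠ d j}`, and it remains to sum over all words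
`d` in the roots of `P`.
-/

open Finset Polynomial

section Words

/-- The content of a word `w` in the alphabet `α`: the number of times each letter occurs in it. -/
def fiberCard {ι α : Type*} [Fintype ι] [DecidableEq α] (w : ι → α) (a : α) : ℕ :=
  #{i | w i = a}

theorem sum_fiberCard {ι α : Type*} [Fintype ι] [Fintype α] [DecidableEq α] (w : ι → α) :
    ∑ a, fiberCard w a = Fintype.card ι :=
  (card_eq_sum_card_fiberwise fun _ _ ↦ mem_univ _).symm

theorem prod_apply_eq_prod_pow_fiberCard {ι α M : Type*} [Fintype ι] [Fintype α] [DecidableEq α]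
    [CommMonoid M] (w : ι → α) (f : α → M) : ∏ i, f (w i) = ∏ a, f a ^ fiberCard w a := by
  simp only [fiberCard, ← prod_const, ← prod_fiberwise' univ w f]

-- Both sides are the coefficient of the monomial with exponents `v` in `(∑ a, X a) ^ n`.
theorem card_fiberCard_eq_multinomial {α : Type*} [Fintype α] [DecidableEq α] {n : ℕ} {v : α → ℕ}
    (hv : v ∈ piAntidiag univ n) :
    #{w : Fin n → α | fiberCard w = v} = Nat.multinomial univ v := by
  have coeff_prod_X_pow (u : α → ℕ) : MvPolynomial.coeff (Finsupp.equivFunOnFinite.symm v)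
      (∏ a, (MvPolynomial.X a : MvPolynomial α ℕ) ^ u a) = if u = v then 1 else 0 := by
    have : ∏ a, (MvPolynomial.X a : MvPolynomial α ℕ) ^ u a =
        MvPolynomial.monomial (Finsupp.equivFunOnFinite.symm u) 1 := by
      simp [MvPolynomial.monomial_eq, Finsupp.prod_fintype]
    simp [this, MvPolynomial.coeff_monomial]
  have expansions : ∑ w : Fin n → α, ∏ a, (MvPolynomial.X a : MvPolynomial α ℕ) ^ fiberCard w a =
      ∑ u ∈ piAntidiag univ n, (Nat.multinomial univ u : MvPolynomial α ℕ) *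
        ∏ a, MvPolynomial.X a ^ u a := by
    simp only [← prod_apply_eq_prod_pow_fiberCard, ← Fintype.sum_pow, sum_pow_eq_sum_piAntidiag]
  have := congrArg (MvPolynomial.coeff (Finsupp.equivFunOnFinite.symm v)) expansions
  simpa [MvPolynomial.coeff_sum, ← nsmul_eq_mul, coeff_prod_X_pow, hv] using this

theorem sum_card_Ioi_ne_eq_sum_card_lt {ι α : Type*} [Fintype ι] [LinearOrder ι]
    [LocallyFiniteOrderTop ι] [LocallyFiniteOrderBot ι] [LinearOrder α] (w : ι → α) :
    ∑ i, #{j ∈ Ioi i | w i ≠ w j} = ∑ i, #{j | w i < w j} := by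
  have card_split (i : ι) : #{j ∈ Ioi i | w i ≠ w j} =
      ∑ j ∈ Ioi i, ((if w i < w j then 1 else 0) + if w j < w i then 1 else 0) := by
    rw [card_filter]
    refine sum_congr rfl fun j _ ↦ ?_
    rcases lt_trichotomy (w i) (w j) with h | h | h
    · simp [h, h.ne, h.not_gt]
    · simp [h]
    · simp [h, h.ne', h.not_gt]
  simp only [card_split]
  rw [sum_sum_Ioi_add_eq_sum_sum_off_diag fun j i ↦ if w i < w j then 1 else 0]
  refine sum_congr rfl fun i _ ↦ ?_
  rw [card_filter, Fintype.sum_eq_add_sum_compl i, if_neg (lt_irrefl _), zero_add]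

theorem sum_card_lt_eq_sum_Ioi_fiberCard_mul {ι α : Type*} [Fintype ι] [Fintype α] [LinearOrder α]
    [LocallyFiniteOrderTop α] (w : ι → α) :
    ∑ i, #{j | w i < w j} = ∑ a, ∑ b ∈ Ioi a, fiberCard w a * fiberCard w b := by
  have card_lt (a : α) : #{j | a < w j} = ∑ b ∈ Ioi a, fiberCard w b := by
    simpa [fiberCard] using (sum_card_fiberwise_eq_card_filter univ (Ioi a) w).symm
  simp only [card_lt, ← mul_sum]
  rw [← sum_fiberwise' univ w (fun a ↦ ∑ b ∈ Ioi a, fiberCard w b)]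
  simp only [sum_const, smul_eq_mul, fiberCard]

theorem sum_fiberCard_eq_sum_multinomial_mul {α : Type*} [Fintype α] [DecidableEq α] (n : ℕ)
    (f : (α → ℕ) → ℕ) : ∑ w : Fin n → α, f (fiberCard w) =
      ∑ v ∈ piAntidiag univ n, Nat.multinomial univ v * f v := by
  rw [← sum_fiberwise_of_maps_to' (g := fiberCard) (t := piAntidiag univ n)
    fun w _ ↦ by simp [sum_fiberCard]]
  refine sum_congr rfl fun v hv ↦ ?_
  rw [sum_const, card_fiberCard_eq_multinomial hv, smul_eq_mul]

theorem sum_pow_card_ne_eq_sum_multinomial_mul (q n s : ℕ) :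
    ∑ w : Fin n → Fin s, q ^ ∑ i, #{j ∈ Ioi i | w i ≠ w j} =
      ∑ v ∈ Finset.Nat.antidiagonalTuple s n,
        Nat.multinomial univ v * q ^ ∑ a, ∑ b ∈ Ioi a, v a * v b := by
  simp only [sum_card_Ioi_ne_eq_sum_card_lt, sum_card_lt_eq_sum_Ioi_fiberCard_mul]
  rw [sum_fiberCard_eq_sum_multinomial_mul n fun v ↦ q ^ ∑ a, ∑ b ∈ Ioi a, v a * v b,
    piAntidiag_univ_fin_eq_antidiagonalTuple]

end Words

section Rank

variable {K : Type*} [Field K]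

theorem finrank_range_aeval_of_separable {V : Type*} [AddCommGroup V] [Module K V]
    [FiniteDimensional K V] {φ : Module.End K V} {a : K} {p : K[X]}
    (hsep : ((X - C a) * p).Separable) (hφ : aeval φ ((X - C a) * p) = 0) :
    Module.finrank K (aeval φ p).range = φ.charpoly.rootMultiplicity a := by
  have semisimple : φ.IsFinitelySemisimple :=
    (Module.End.isSemisimple_of_squarefree_aeval_eq_zero hsep.squarefree hφ).isFinitelySemisimple
  have eigenspace_eq : φ.eigenspace a = (aeval φ (X - C a)).ker := by
    rw [Module.End.eigenspace_def, map_sub, aeval_X, aeval_C, Algebra.algebraMap_eq_smul_one]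
  have isCompl : IsCompl (φ.eigenspace a) (aeval φ p).ker := by
    rw [eigenspace_eq]
    refine ⟨disjoint_ker_aeval_of_isCoprime φ hsep.isCoprime, codisjoint_iff.2 ?_⟩
    rw [sup_ker_aeval_eq_ker_aeval_mul_of_coprime φ hsep.isCoprime, hφ, LinearMap.ker_zero]
  have dim_eigenspace : Module.finrank K (φ.eigenspace a) = φ.charpoly.rootMultiplicity a := by
    rw [← semisimple.maxGenEigenspace_eq_eigenspace, LinearMap.finrank_maxGenEigenspace_eq]
  have := Submodule.finrank_add_eq_of_isCompl isCompl
  have := (aeval φ p).finrank_range_add_finrank_ker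
  lia

theorem rank_aeval_of_separable {ι : Type*} [Fintype ι] [DecidableEq ι] {A : Matrix ι ι K} {a : K}
    {p : K[X]} (hsep : ((X - C a) * p).Separable) (hA : aeval A ((X - C a) * p) = 0) :
    (aeval A p).rank = A.charpoly.rootMultiplicity a := by
  have aeval_toLin (r : K[X]) : aeval (Matrix.toLinAlgEquiv' A) r =
      Matrix.toLinAlgEquiv' (aeval A r) := aeval_algHom_apply Matrix.toLinAlgEquiv' A r
  have := finrank_range_aeval_of_separable hsep (by rw [aeval_toLin, hA, map_zero])
  rw [aeval_toLin] at this
  rwa [← A.charpoly_toLin']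

theorem finrank_ker_vecMulLinear {m n : Type*} [Fintype m] [Fintype n] (A : Matrix m n K) :
    Module.finrank K A.vecMulLinear.ker = Fintype.card m - A.rank := by
  have := A.vecMulLinear.finrank_range_add_finrank_ker
  rw [range_vecMulLinear, ← A.rank_eq_finrank_span_row, Module.finrank_fintype_fun_eq_card] at this
  lia

theorem rootMultiplicity_charpoly_of_isUpperTriangular {R ι : Type*} [CommRing R] [IsDomain R]
    [DecidableEq R] [Fintype ι] [LinearOrder ι] {A : Matrix ι ι R} (hA : A.IsUpperTriangular)
    (a : R) : A.charpoly.rootMultiplicity a = fiberCard A.diag a := by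
  rw [A.charpoly_of_isUpperTriangular hA, ← count_roots,
    roots_prod _ _ (prod_ne_zero_iff.2 fun i _ ↦ X_sub_C_ne_zero _)]
  simp only [roots_X_sub_C, Multiset.bind_singleton, Multiset.count_map, eq_comm (a := a)]
  rfl

variable {ι : Type*} [Fintype ι] [LinearOrder ι] {A : Matrix ι ι K}

theorem finrank_ker_vecMulLinear_aeval_of_isUpperTriangular [DecidableEq K]
    (hA : A.IsUpperTriangular) {a : K} {p : K[X]} (hsep : ((X - C a) * p).Separable)
    (hp : aeval A ((X - C a) * p) = 0) :
    Module.finrank K (aeval A p).vecMulLinear.ker = #{i | a ≠ A i i} := by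
  rw [finrank_ker_vecMulLinear, rank_aeval_of_separable hsep hp,
    rootMultiplicity_charpoly_of_isUpperTriangular hA, fiberCard, ← card_compl, compl_filter]
  simp only [Matrix.diag_apply, ne_comm, ne_eq]

theorem isRoot_diag_of_isUpperTriangular (hA : A.IsUpperTriangular) {p : K[X]}
    (hp : aeval A p = 0) (i : ι) : p.IsRoot (A i i) := by
  have mem_spectrum : A i i ∈ spectrum K A := by
    rw [Matrix.mem_spectrum_iff_isRoot_charpoly, A.charpoly_of_isUpperTriangular hA, IsRoot.def,
      eval_prod]
    exact prod_eq_zero (mem_univ i) (by simp)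
  have : Nonempty ι := ⟨i⟩
  simpa [hp] using spectrum.subset_polynomial_aeval A p ⟨_, mem_spectrum, rfl⟩

end Rank

/-- The block matrix `[[a, b], [0, A]]`, indexed so that `a` is the entry at `(0, 0)`. -/
def upperBlock {R : Type*} [Zero R] {n : ℕ} (a : R) (b : Fin n → R)
    (A : Matrix (Fin n) (Fin n) R) : Matrix (Fin (n + 1)) (Fin (n + 1)) R :=
  .of (Matrix.vecCons (Matrix.vecCons a b) fun i ↦ Matrix.vecCons 0 (A i))

section UpperBlock

variable {R : Type*} [Zero R] {n : ℕ}

@[simp]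
theorem upperBlock_zero_zero (a : R) (b : Fin n → R) (A : Matrix (Fin n) (Fin n) R) :
    upperBlock a b A 0 0 = a := rfl

@[simp]
theorem upperBlock_zero_succ (a : R) (b : Fin n → R) (A : Matrix (Fin n) (Fin n) R) (j : Fin n) :
    upperBlock a b A 0 j.succ = b j := rfl

@[simp]
theorem upperBlock_succ_zero (a : R) (b : Fin n → R) (A : Matrix (Fin n) (Fin n) R) (i : Fin n) :
    upperBlock a b A i.succ 0 = 0 := rfl

@[simp]
theorem upperBlock_succ_succ (a : R) (b : Fin n → R) (A : Matrix (Fin n) (Fin n) R)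
    (i j : Fin n) : upperBlock a b A i.succ j.succ = A i j := rfl

theorem upperBlock_eq_zero_iff {a : R} {b : Fin n → R} {A : Matrix (Fin n) (Fin n) R} :
    upperBlock a b A = 0 ↔ a = 0 ∧ b = 0 ∧ A = 0 := by
  simp [← Matrix.ext_iff, Fin.forall_fin_succ, funext_iff, and_assoc]

theorem isUpperTriangular_upperBlock_iff {a : R} {b : Fin n → R} {A : Matrix (Fin n) (Fin n) R} :
    (upperBlock a b A).IsUpperTriangular ↔ A.IsUpperTriangular := by
  simp [Matrix.IsUpperTriangular, Matrix.BlockTriangular, Fin.forall_fin_succ]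

theorem diag_upperBlock (a : R) (b : Fin n → R) (A : Matrix (Fin n) (Fin n) R) :
    (upperBlock a b A).diag = Fin.cons a A.diag := by
  ext i
  cases i using Fin.cases <;> rfl

theorem eq_upperBlock_of_isUpperTriangular {M : Matrix (Fin (n + 1)) (Fin (n + 1)) R}
    (hM : M.IsUpperTriangular) :
    M = upperBlock (M 0 0) (fun j ↦ M 0 j.succ) (M.submatrix Fin.succ Fin.succ) := by
  ext i j
  cases i using Fin.cases with
  | zero => cases j using Fin.cases <;> rfl
  | succ i =>
    cases j using Fin.cases with
    | zero => exact hM i.succ_pos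
    | succ j => rfl

end UpperBlock

section AevalUpperBlock

variable {R : Type*} [CommSemiring R] {n : ℕ}

theorem upperBlock_add (a a' : R) (b b' : Fin n → R) (A A' : Matrix (Fin n) (Fin n) R) :
    upperBlock a b A + upperBlock a' b' A' = upperBlock (a + a') (b + b') (A + A') := by
  ext i j
  cases i using Fin.cases <;> cases j using Fin.cases <;> simp

theorem upperBlock_mul (a a' : R) (b b' : Fin n → R) (A A' : Matrix (Fin n) (Fin n) R) :
    upperBlock a b A * upperBlock a' b' A' =
      upperBlock (a * a') (a • b' + Matrix.vecMul b A') (A * A') := by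
  ext i j
  cases i using Fin.cases <;> cases j using Fin.cases <;>
    simp [Matrix.mul_apply, Fin.sum_univ_succ, Matrix.vecMul, dotProduct]

theorem algebraMap_eq_upperBlock (r : R) :
    algebraMap R (Matrix (Fin (n + 1)) (Fin (n + 1)) R) r = upperBlock r 0 (algebraMap R _ r) := by
  ext i j
  cases i using Fin.cases <;> cases j using Fin.cases <;>
    simp [Matrix.algebraMap_matrix_apply, Fin.succ_ne_zero, (Fin.succ_ne_zero _).symm]

theorem exists_aeval_upperBlock_eq (a : R) (b : Fin n → R) (A : Matrix (Fin n) (Fin n) R)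
    (p : R[X]) : ∃ c, aeval (upperBlock a b A) p = upperBlock (p.eval a) c (aeval A p) := by
  induction p using Polynomial.induction_on with
  | C r => exact ⟨0, by simp only [aeval_C, eval_C, algebraMap_eq_upperBlock]⟩
  | add p q hp hq =>
    obtain ⟨⟨c, hc⟩, ⟨c', hc'⟩⟩ := hp, hq
    exact ⟨c + c', by simp only [map_add, eval_add, hc, hc', upperBlock_add]⟩
  | monomial m r hm =>
    obtain ⟨c, hc⟩ := hm
    refine ⟨(C r * X ^ m).eval a • b + Matrix.vecMul c A, ?_⟩
    rw [pow_succ, ← mul_assoc, eval_mul_X, map_mul, map_mul (aeval A) _ X, hc, aeval_X, aeval_X,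
      upperBlock_mul]

end AevalUpperBlock

theorem aeval_upperBlock {R : Type*} [CommRing R] {n : ℕ} (a : R) (b : Fin n → R)
    (A : Matrix (Fin n) (Fin n) R) (p : R[X]) :
    aeval (upperBlock a b A) p =
      upperBlock (p.eval a) (Matrix.vecMul b (aeval A (p /ₘ (X - C a)))) (aeval A p) := by
  obtain ⟨c, hc⟩ := exists_aeval_upperBlock_eq a b A (p /ₘ (X - C a))
  have division : C (p.eval a) + (X - C a) * (p /ₘ (X - C a)) = p := by
    rw [← modByMonic_X_sub_C_eq_C_eval, modByMonic_add_div]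
  have aeval_X_sub_C : aeval (upperBlock a b A) (X - C a) = upperBlock 0 b (aeval A (X - C a)) := by
    rw [map_sub, aeval_X, aeval_C, algebraMap_eq_upperBlock, sub_eq_iff_eq_add, upperBlock_add]
    simp
  calc aeval (upperBlock a b A) p
      = aeval (upperBlock a b A) (C (p.eval a) + (X - C a) * (p /ₘ (X - C a))) := by rw [division]
    _ = upperBlock (p.eval a) (Matrix.vecMul b (aeval A (p /ₘ (X - C a))))
          (aeval A (C (p.eval a) + (X - C a) * (p /ₘ (X - C a)))) := by
      rw [map_add, map_mul, aeval_X_sub_C, hc, aeval_C, algebraMap_eq_upperBlock, upperBlock_mul,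
        upperBlock_add, map_add, map_mul, aeval_C]
      simp
    _ = _ := by rw [division]

/-- The upper triangular matrices with diagonal `d` that are annihilated by the polynomial `P`. -/
def triangularZeros {R : Type*} [CommRing R] {n : ℕ} (P : R[X]) (d : Fin n → R) :
    Set (Matrix (Fin n) (Fin n) R) :=
  {A | aeval A P = 0 ∧ A.IsUpperTriangular ∧ A.diag = d}

section TriangularZeros

variable {R : Type*} [CommRing R] {n : ℕ} {P : R[X]} {a : R} {d : Fin n → R}

theorem upperBlock_mem_triangularZeros_cons_iff (ha : P.IsRoot a) {b : Fin n → R}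
    {A : Matrix (Fin n) (Fin n) R} :
    upperBlock a b A ∈ triangularZeros P (Fin.cons a d : Fin (n + 1) → R) ↔
      A ∈ triangularZeros P d ∧ b ∈ (aeval A (P /ₘ (X - C a))).vecMulLinear.ker := by
  simp only [triangularZeros, Set.mem_ofPred_eq, aeval_upperBlock, upperBlock_eq_zero_iff,
    ha.eq_zero, isUpperTriangular_upperBlock_iff, diag_upperBlock, Fin.cons_inj, LinearMap.mem_ker,
    Matrix.vecMulLinear_apply]
  tauto

theorem eq_upperBlock_of_mem_triangularZeros_cons {M : Matrix (Fin (n + 1)) (Fin (n + 1)) R}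
    (hM : M ∈ triangularZeros P (Fin.cons a d : Fin (n + 1) → R)) :
    M = upperBlock a (fun j ↦ M 0 j.succ) (M.submatrix Fin.succ Fin.succ) := by
  have hdiag : M 0 0 = a := congrFun hM.2.2 0
  exact hdiag ▸ eq_upperBlock_of_isUpperTriangular hM.2.1

/-- Splitting a matrix into its diagonal entry `a` at `(0, 0)`, the rest of its first row and the
block obtained by deleting the first row and column. -/
def triangularZerosConsEquiv (ha : P.IsRoot a) :
    triangularZeros P (Fin.cons a d : Fin (n + 1) → R) ≃
      Σ A : triangularZeros P d, (aeval A.1 (P /ₘ (X - C a))).vecMulLinear.ker where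
  toFun M :=
    have hM := (upperBlock_mem_triangularZeros_cons_iff ha).1
      (eq_upperBlock_of_mem_triangularZeros_cons M.2 ▸ M.2)
    ⟨⟨M.1.submatrix Fin.succ Fin.succ, hM.1⟩, ⟨fun j ↦ M.1 0 j.succ, hM.2⟩⟩
  invFun x := ⟨upperBlock a x.2 x.1, (upperBlock_mem_triangularZeros_cons_iff ha).2 ⟨x.1.2, x.2.2⟩⟩
  left_inv M := Subtype.ext (eq_upperBlock_of_mem_triangularZeros_cons M.2).symm
  right_inv _ := rfl

end TriangularZeros

/-- Sorting the upper triangular matrices annihilated by `P` by their diagonal. -/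
def triangularEquivSigmaTriangularZeros {K : Type*} [Field K] (P : K[X]) (n : ℕ) :
    {A : Matrix (Fin n) (Fin n) K // aeval A P = 0 ∧ A.IsUpperTriangular} ≃
      Σ d : Fin n → {x // P.IsRoot x}, triangularZeros P fun i ↦ (d i : K) where
  toFun A := ⟨fun i ↦ ⟨A.1 i i, isRoot_diag_of_isUpperTriangular A.2.2 A.2.1 i⟩,
    A.1, A.2.1, A.2.2, rfl⟩
  invFun x := ⟨x.2.1, x.2.2.1, x.2.2.2.1⟩
  left_inv _ := rfl
  right_inv := by
    rintro ⟨d, A, hA, htri, hd⟩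
    obtain rfl : d = fun i ↦ ⟨A i i, isRoot_diag_of_isUpperTriangular htri hA i⟩ :=
      funext fun i ↦ Subtype.ext (congrFun hd i).symm
    rfl

section Count

variable {K : Type*} [Field K] [Finite K] [DecidableEq K] {P : K[X]}

theorem card_triangularZeros_cons (hP : P.Separable) {a : K} (ha : P.IsRoot a) {n : ℕ}
    (d : Fin n → K) :
    Nat.card (triangularZeros P (Fin.cons a d : Fin (n + 1) → K)) =
      Nat.card (triangularZeros P d) * Nat.card K ^ #{i | a ≠ d i} := by
  have : Fintype (triangularZeros P d) := .ofFinite _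
  have factor : (X - C a) * (P /ₘ (X - C a)) = P := mul_divByMonic_eq_iff_isRoot.2 ha
  have card_rows (A : triangularZeros P d) :
      Nat.card (aeval A.1 (P /ₘ (X - C a))).vecMulLinear.ker = Nat.card K ^ #{i | a ≠ d i} := by
    obtain ⟨A, hA, htri, rfl⟩ := A
    rw [Module.natCard_eq_pow_finrank (K := K),
      finrank_ker_vecMulLinear_aeval_of_isUpperTriangular htri (factor.symm ▸ hP)
        (factor.symm ▸ hA)]
    rfl
  rw [Nat.card_congr (triangularZerosConsEquiv ha), Nat.card_sigma]
  simp only [card_rows, sum_const, card_univ, smul_eq_mul, Nat.card_eq_fintype_card]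

theorem card_triangularZeros (hP : P.Separable) {n : ℕ} {d : Fin n → K}
    (hd : ∀ i, P.IsRoot (d i)) :
    Nat.card (triangularZeros P d) = Nat.card K ^ ∑ i, #{j ∈ Ioi i | d i ≠ d j} := by
  induction d using Fin.consInduction with
  | elim0 =>
    have : triangularZeros P (Fin.elim0 : Fin 0 → K) = Set.univ :=
      Set.eq_univ_of_forall fun A ↦ ⟨Subsingleton.elim _ _, fun i ↦ i.elim0, Subsingleton.elim _ _⟩
    simp [this]
  | cons a d ih =>
    rw [card_triangularZeros_cons hP (show P.IsRoot a from hd 0), ih fun i ↦ hd i.succ, ← pow_add,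
      Fin.sum_univ_succ, add_comm]
    simp only [Fin.Ioi_zero_eq_map, Fin.Ioi_succ, filter_map, card_map, Function.comp_def,
      Fin.coe_succEmb, Fin.cons_zero, Fin.cons_succ]

end Count

theorem stmt_10_general {K : Type*} [Field K] [Fintype K] [DecidableEq K] {P : K[X]}
    (hP : P.Separable) (n : ℕ) {s : ℕ} (hs : #{x | P.IsRoot x} = s) :
    Nat.card {A : Matrix (Fin n) (Fin n) K // aeval A P = 0 ∧ A.IsUpperTriangular} =
      ∑ v ∈ Finset.Nat.antidiagonalTuple s n,
        Nat.multinomial univ v * Fintype.card K ^ ∑ i, ∑ j ∈ Ioi i, v i * v j := by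
  let e : {x // P.IsRoot x} ≃ Fin s := Fintype.equivFinOfCardEq (by rw [Fintype.card_subtype, hs])
  calc
    _ = ∑ d : Fin n → {x // P.IsRoot x}, Fintype.card K ^ ∑ i, #{j ∈ Ioi i | d i ≠ d j} := by
      rw [Nat.card_congr (triangularEquivSigmaTriangularZeros P n), Nat.card_sigma]
      refine sum_congr rfl fun d _ ↦ ?_
      rw [card_triangularZeros hP fun i ↦ (d i).2, Nat.card_eq_fintype_card]
      simp only [ne_eq, Subtype.val_inj]
    _ = ∑ w : Fin n → Fin s, Fintype.card K ^ ∑ i, #{j ∈ Ioi i | w i ≠ w j} :=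
      Fintype.sum_equiv (Equiv.piCongrRight fun _ ↦ e) _ _ fun d ↦ by simp
    _ = _ := sum_pow_card_ne_eq_sum_multinomial_mul _ n s

theorem separable_X_pow_succ_sub_X {K : Type*} [Field K] {k : ℕ} (hk : (k : K) ≠ 0) :
    (X ^ (k + 1) - X : K[X]).Separable := by
  obtain ⟨m, rfl⟩ := Nat.exists_eq_succ_of_ne_zero (n := k) (by rintro rfl; simp at hk)
  have coprime : IsCoprime X (X ^ (m + 1) - 1 : K[X]) := ⟨X ^ m, -1, by ring⟩
  have := separable_X.mul (X_pow_sub_one_separable_iff.2 hk) coprime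
  rwa [mul_sub_one, ← pow_succ'] at this

/-- Counting all `(k+1)`-potent upper triangular `n×n` matrices over a finite field `K`
with `q` elements, where `s` is the number of solutions of `x^(k+1) = x` in `K`:
their number is `∑_{n₁+⋯+n_s = n} (n! / (n₁!⋯n_s!)) · q^(∑_{i<j} n_i n_j)`. -/
theorem stmt_10 {K : Type*} [Field K] [Fintype K] [DecidableEq K] (q k n s : ℕ)
    (hq : Fintype.card K = q) (hk : 1 ≤ k)
    (hchar_k : (k : K) ≠ 0) (hchar_k1 : ((k + 1 : ℕ) : K) ≠ 0)
    (hs : (Finset.univ.filter (fun x : K => x ^ (k + 1) = x)).card = s) :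
    Nat.card {A : Matrix (Fin n) (Fin n) K //
        A ^ (k + 1) = A ∧ ∀ i j : Fin n, j < i → A i j = 0}
      = ∑ v ∈ Finset.Nat.antidiagonalTuple s n,
          Nat.multinomial Finset.univ v *
            q ^ (∑ i : Fin s, ∑ j ∈ Finset.Ioi i, v i * v j) := by
  subst hq
  simpa [sub_eq_zero, Matrix.IsUpperTriangular, Matrix.BlockTriangular] using
    stmt_10_general (separable_X_pow_succ_sub_X hchar_k) n (by simpa [sub_eq_zero] using hs)
end

section
/- Let K be a finite field with q elements whose characteristic divides neither k nor k+1 (k ≥ 1), and let s be the number of elements x ∈ K with x^(k+1) = x. Let X be the star poset on the set {x₀, x₁, …, x_n, y₁, …, y_m} with relations: x₀ ≤ x_i for i = 1,…,n and x_i ≤ x_j for i ≤ j; x₀ ≤ y_i for i = 1,…,m and y_i ≤ y_j for i ≤ j; and no element x_i (i ≥ 1) is comparable with any y_j. Then the number of elements f of the incidence algebra I(X, K) satisfying f^(k+1) = f equals N(n+1) · P(m), where N(n+1) is the number of (n+1)×(n+1) upper triangular matrices A over K with A^(k+1) = A, and P(m) = Σ_{(m₁,…,m_s)} (m! / (m₁!⋯m_s!))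 · q^(Σ_{1 ≤ i < j ≤ s} m_i·m_j) · q^(m₂ + m₃ + ⋯ + m_s), the sum ranging over all tuples of natural numbers (m₁, …, m_s) with m₁ + ⋯ + m_s = m. -/
/-!
The diagonal `c` of a `(k+1)`-potent element `f` consists of roots of `z ^ (k + 1) - z`, and these
are simple because `k ≠ 0` in `K`. Hence the noncommutative divided difference of this polynomial at
`f` and the diagonal element of `c` has invertible diagonal, so it is a unit, and it conjugates one
into the other. The potent elements with diagonal `c` therefore form a single conjugation orbit,
which by orbit–stabilizer has `q ^ #{x < y | c x ≠ c y}` elements.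

On a star poset the exponent splits into a contribution of each chain and the number of `y j` whose
colour differs from that of `x₀`. Summed over the colourings of the second chain, the last two
depend only on the sizes of the colour classes, and up to relabelling the colours the sum does not
depend on the colour of `x₀`, so the two chains contribute independent factors.
-/

open Finset

section Fibers

variable {ι σ : Type*} [Fintype ι] [DecidableEq σ]

lemma prod_X_comp_eq_monomial_card_fiber [Finite σ] (b : ι → σ) :
    ∏ j, (MvPolynomial.X (b j) : MvPolynomial σ ℕ) =
      MvPolynomial.monomial (Finsupp.equivFunOnFinite.symm fun i => #{j | b j = i}) 1 := by
  cases nonempty_fintype σ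
  rw [MvPolynomial.monomial_eq, Finsupp.prod_fintype _ _ fun _ => pow_zero _,
    ← prod_fiberwise' univ b MvPolynomial.X]
  simp only [prod_const, Finsupp.equivFunOnFinite_symm_apply_apply, map_one, one_mul]

/-- Both sides are the coefficient of the monomial `v` in `(∑ i, X i) ^ card ι`. -/
lemma card_filter_card_fiber_eq_multinomial_s12 [DecidableEq ι] [Fintype σ] (v : σ → ℕ)
    (hv : ∑ i, v i = Fintype.card ι) :
    #{b : ι → σ | (fun i => #{j | b j = i}) = v} = Nat.multinomial univ v := by
  have expand : (∑ i, MvPolynomial.X i : MvPolynomial σ ℕ) ^ Fintype.card ι =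
      ∑ b : ι → σ, ∏ j, MvPolynomial.X (b j) := by
    rw [← Fintype.prod_sum, prod_const, card_univ]
  have monomial_eq (w : σ → ℕ) : ∏ i, (MvPolynomial.X i : MvPolynomial σ ℕ) ^ w i =
      MvPolynomial.monomial (Finsupp.equivFunOnFinite.symm w) 1 := by
    rw [MvPolynomial.monomial_eq, Finsupp.prod_fintype _ _ fun _ => pow_zero _]
    simp
  have coeff_eq := congrArg (MvPolynomial.coeff (Finsupp.equivFunOnFinite.symm v)) expand
  simp only [sum_pow_eq_sum_piAntidiag, prod_X_comp_eq_monomial_card_fiber, monomial_eq,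
    MvPolynomial.coeff_sum, MvPolynomial.coeff_monomial,
    ← map_natCast (MvPolynomial.C : ℕ →+* MvPolynomial σ ℕ), MvPolynomial.coeff_C_mul,
    EmbeddingLike.apply_eq_iff_eq, mul_ite, mul_one, mul_zero, sum_ite_eq', sum_boole,
    mem_piAntidiag, hv, mem_univ, implies_true, and_self, if_true, Nat.cast_id] at coeff_eq
  exact coeff_eq.symm

lemma sum_comp_card_fiber [DecidableEq ι] [Fintype σ] (F : (σ → ℕ) → ℕ) :
    ∑ b : ι → σ, F (fun i => #{j | b j = i}) =
      ∑ v ∈ piAntidiag univ (Fintype.card ι), Nat.multinomial univ v * F v := by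
  have maps_to (b : ι → σ) (_ : b ∈ univ) :
      (fun i => #{j | b j = i}) ∈ piAntidiag univ (Fintype.card ι) := by
    simp [mem_piAntidiag, ← card_eq_sum_card_fiberwise]
  rw [← sum_fiberwise_of_maps_to' maps_to F]
  refine sum_congr rfl fun v hv => ?_
  rw [sum_const, smul_eq_mul, card_filter_card_fiber_eq_multinomial_s12 v (mem_piAntidiag.1 hv).1]

end Fibers

/-- The number of pairs `x < y` on which a colouring `c` takes different values. It is the exponent
of `q` in the number of potent elements with diagonal `c`. -/
noncomputable def discordantPairs {Y S : Type*} [LT Y] (c : Y → S) : ℕ :=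
  Nat.card {p : Y × Y // p.1 < p.2 ∧ c p.1 ≠ c p.2}

section DiscordantPairs

variable {Y S T : Type*}

lemma discordantPairs_comp_of_injective [LT Y] {g : S → T} (hg : Function.Injective g)
    (c : Y → S) : discordantPairs (g ∘ c) = discordantPairs c := by
  simp only [discordantPairs, Function.comp_apply, hg.ne_iff]

lemma discordantPairs_eq_sum [LT Y] [Fintype Y] [DecidableLT Y] [DecidableEq S] (c : Y → S) :
    discordantPairs c = ∑ x, ∑ y, if x < y ∧ c x ≠ c y then 1 else 0 := by
  rw [discordantPairs, Nat.card_eq_fintype_card, Fintype.card_subtype, card_filter,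
    Fintype.sum_prod_type]

/-- Orient each discordant pair by its colours instead of by its positions. -/
lemma discordantPairs_eq_card_lt [LinearOrder Y] [Fintype Y] [LinearOrder S] (c : Y → S) :
    discordantPairs c = #{p : Y × Y | c p.1 < c p.2} := by
  have swap : #{p : Y × Y | p.1 < p.2 ∧ c p.2 < c p.1} =
      #{p : Y × Y | p.2 < p.1 ∧ c p.1 < c p.2} :=
    card_equiv (Equiv.prodComm Y Y) (by simp)
  calc discordantPairs c
      = #{p : Y × Y | p.1 < p.2 ∧ c p.1 ≠ c p.2} := by
        rw [discordantPairs, Nat.card_eq_fintype_card, Fintype.card_subtype]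
    _ = #{p : Y × Y | p.1 < p.2 ∧ c p.1 < c p.2} + #{p : Y × Y | p.1 < p.2 ∧ c p.2 < c p.1} := by
        rw [← card_union_of_disjoint (disjoint_filter.2 fun p _ h h' => h.2.asymm h'.2),
          ← filter_or]
        simp only [← and_or_left, ne_iff_lt_or_gt]
    _ = #{p : Y × Y | c p.1 < c p.2} := by
        rw [swap, ← card_union_of_disjoint (disjoint_filter.2 fun p _ h h' => h.1.asymm h'.1),
          ← filter_or]
        congr 1
        refine filter_congr fun p _ => ?_
        rw [← or_and_right, ← ne_iff_lt_or_gt, and_iff_right_iff_imp]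
        exact fun h => mt (congrArg c) h.ne

lemma discordantPairs_eq_sum_card_fiber [LinearOrder Y] [Fintype Y] [LinearOrder S] [Fintype S]
    [LocallyFiniteOrderTop S] (c : Y → S) :
    discordantPairs c = ∑ i, ∑ j ∈ Ioi i, #{l | c l = i} * #{l | c l = j} := by
  have inner (i : S) : #{l | i < c l} = ∑ j ∈ Ioi i, #{l | c l = j} := by
    simp only [sum_card_fiberwise_eq_card_filter, mem_Ioi]
  calc discordantPairs c
      = ∑ l, #{l' | c l < c l'} := by
        simp only [discordantPairs_eq_card_lt, card_filter, Fintype.sum_prod_type]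
    _ = ∑ i, ∑ l with c l = i, #{l' | i < c l'} :=
        (sum_fiberwise' univ c fun i => #{l' | i < c l'}).symm
    _ = ∑ i, ∑ j ∈ Ioi i, #{l | c l = i} * #{l | c l = j} := by
        simp only [sum_const, smul_eq_mul, inner, mul_sum]

lemma sum_pow_discordantPairs_fin [LinearOrder Y] [Fintype Y] (q : ℕ) {s : ℕ} (z : Fin s) :
    ∑ b : Y → Fin s, q ^ (discordantPairs b + #{j | b j ≠ z}) =
      ∑ v ∈ Finset.Nat.antidiagonalTuple s (Fintype.card Y),
        Nat.multinomial univ v * q ^ (∑ i, ∑ j ∈ Ioi i, v i * v j) *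
          q ^ (∑ j with j ≠ z, v j) := by
  have card_ne (b : Y → Fin s) : #{j | b j ≠ z} = ∑ i with i ≠ z, #{j | b j = i} := by
    simp only [sum_card_fiberwise_eq_card_filter, mem_filter, mem_univ, true_and]
  simp only [discordantPairs_eq_sum_card_fiber, card_ne, mul_assoc, ← pow_add,
    ← piAntidiag_univ_fin_eq_antidiagonalTuple]
  exact sum_comp_card_fiber fun v : Fin s → ℕ =>
    q ^ (∑ i, ∑ j ∈ Ioi i, v i * v j + ∑ j with j ≠ z, v j)

lemma sum_pow_discordantPairs [LinearOrder Y] [Fintype Y] [Fintype S] [DecidableEq S] (q : ℕ)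
    {s : ℕ} (hs : Fintype.card S = s) (z : Fin s) (a : S) :
    ∑ b : Y → S, q ^ (discordantPairs b + #{j | b j ≠ a}) =
      ∑ v ∈ Finset.Nat.antidiagonalTuple s (Fintype.card Y),
        Nat.multinomial univ v * q ^ (∑ i, ∑ j ∈ Ioi i, v i * v j) *
          q ^ (∑ j with j ≠ z, v j) := by
  let e₀ := Fintype.equivFinOfCardEq hs
  let e : S ≃ Fin s := e₀.trans (Equiv.swap (e₀ a) z)
  have e_apply : e a = z := by simp [e]
  rw [← sum_pow_discordantPairs_fin]
  refine Fintype.sum_equiv (Equiv.arrowCongr (Equiv.refl _) e) _ _ fun b => ?_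
  change _ = q ^ (discordantPairs (e ∘ b) + #{j | e (b j) ≠ z})
  rw [discordantPairs_comp_of_injective e.injective]
  simp only [← e_apply, e.injective.ne_iff]

end DiscordantPairs

/-- `x : A → X` and `y : B → X` exhibit `X` as two posets glued at the bottom `x ⊥` of the first:
they cover `X`, and the only relations between the two parts are `x ⊥ ≤ y b`. The star poset is the
case of two chains. -/
structure IsStarPoset {A B X : Type*} [PartialOrder A] [OrderBot A] [PartialOrder B]
    [PartialOrder X] (x : A → X) (y : B → X) : Prop where
  left_le_left : ∀ a a', x a ≤ x a' ↔ a ≤ a'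
  right_le_right : ∀ b b', y b ≤ y b' ↔ b ≤ b'
  left_le_right : ∀ a b, x a ≤ y b ↔ a = ⊥
  not_right_le_left : ∀ a b, ¬ y b ≤ x a
  cover : ∀ w, (∃ a, w = x a) ∨ ∃ b, w = y b

namespace IsStarPoset

variable {A B X : Type*} [PartialOrder A] [OrderBot A] [PartialOrder B] [PartialOrder X]
  {x : A → X} {y : B → X}

lemma sumElim_bijective (h : IsStarPoset x y) : Function.Bijective (Sum.elim x y) := by
  constructor
  · rintro (a | b) (a' | b') hw
    · exact congrArg _ (le_antisymm ((h.left_le_left _ _).1 hw.le) ((h.left_le_left _ _).1 hw.ge))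
    · exact (h.not_right_le_left a b' hw.ge).elim
    · exact (h.not_right_le_left a' b hw.le).elim
    · exact congrArg _
        (le_antisymm ((h.right_le_right _ _).1 hw.le) ((h.right_le_right _ _).1 hw.ge))
  · intro w
    rcases h.cover w with ⟨a, rfl⟩ | ⟨b, rfl⟩
    · exact ⟨.inl a, rfl⟩
    · exact ⟨.inr b, rfl⟩

/-- The points of a star poset as the disjoint union of those of its two parts. -/
noncomputable def sumEquiv (h : IsStarPoset x y) : A ⊕ B ≃ X :=
  Equiv.ofBijective (Sum.elim x y) h.sumElim_bijective

lemma discordantPairs_eq [Finite A] [Fintype B] {S : Type*} [DecidableEq S]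
    (h : IsStarPoset x y) (c : X → S) :
    discordantPairs c = discordantPairs (c ∘ x) +
      (discordantPairs (c ∘ y) + #{b | c (y b) ≠ c (x ⊥)}) := by
  classical
  cases nonempty_fintype A
  let : Fintype X := Fintype.ofEquiv _ h.sumEquiv
  have left_lt_left (a a') : x a < x a' ↔ a < a' := by simp only [lt_iff_le_not_ge, h.left_le_left]
  have right_lt_right (b b') : y b < y b' ↔ b < b' := by
    simp only [lt_iff_le_not_ge, h.right_le_right]
  have left_lt_right (a b) : x a < y b ↔ a = ⊥ := by
    simp only [lt_iff_le_not_ge, h.left_le_right, h.not_right_le_left, not_false_eq_true, and_true]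
  have not_right_lt_left (a b) : ¬ y b < x a := fun hlt => h.not_right_le_left a b hlt.le
  have mixed : (∑ a, ∑ b, if a = ⊥ ∧ c (x a) ≠ c (y b) then 1 else 0) =
      #{b | c (y b) ≠ c (x ⊥)} := by
    rw [Fintype.sum_eq_single ⊥ fun a ha => by simp [ha], card_filter]
    simp only [true_and, ne_comm]
  simp only [discordantPairs_eq_sum, ← h.sumEquiv.sum_comp, Fintype.sum_sum_type, sumEquiv,
    Equiv.ofBijective_apply, Sum.elim_inl, Sum.elim_inr, left_lt_left, right_lt_right,
    left_lt_right, not_right_lt_left, false_and, if_false, sum_add_distrib, mixed,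
    sum_const_zero, Function.comp_apply]
  ring

lemma sum_pow_discordantPairs [Fintype A] [Fintype B] [DecidableEq A] [DecidableEq B]
    [DecidableEq X] [Fintype X] {S : Type*} [Fintype S] [DecidableEq S] (h : IsStarPoset x y)
    (q : ℕ) :
    ∑ c : X → S, q ^ discordantPairs c = ∑ a : A → S, q ^ discordantPairs a *
      ∑ b : B → S, q ^ (discordantPairs b + #{j | b j ≠ a ⊥}) := by
  let split : (X → S) ≃ (A → S) × (B → S) :=
    (h.sumEquiv.symm.arrowCongr (Equiv.refl S)).trans (Equiv.sumArrowEquivProdArrow A B S)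
  calc ∑ c : X → S, q ^ discordantPairs c
      = ∑ p : (A → S) × (B → S),
          q ^ (discordantPairs p.1 + (discordantPairs p.2 + #{j | p.2 j ≠ p.1 ⊥})) :=
        Fintype.sum_equiv split _ _ fun c => congrArg (q ^ ·) (h.discordantPairs_eq c)
    _ = _ := by simp only [Fintype.sum_prod_type, mul_sum, pow_add]

end IsStarPoset

/-- The telescoping divided-difference identity, valid without assuming that `f` and `d` commute. -/
lemma mul_sum_pow_sub_sum_pow_mul {R : Type*} [Ring R] (f d : R) (n : ℕ) :
    f * ∑ i ∈ range n, f ^ i * d ^ (n - 1 - i) - (∑ i ∈ range n, f ^ i * d ^ (n - 1 - i)) * d =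
      f ^ n - d ^ n := by
  calc _ = ∑ i ∈ range n, (f ^ (i + 1) * d ^ (n - (i + 1)) - f ^ i * d ^ (n - i)) := by
        rw [mul_sum, sum_mul, ← sum_sub_distrib]
        refine sum_congr rfl fun i hi => ?_
        have exponent : n - i = n - 1 - i + 1 := by have := mem_range.1 hi; omega
        rw [exponent, ← mul_assoc, ← pow_succ', mul_assoc, ← pow_succ, Nat.sub_sub, add_comm 1 i]
    _ = f ^ n - d ^ n := by rw [sum_range_sub fun i => f ^ i * d ^ (n - i)]; simp

/-- The left side is the derivative of `z ^ (k + 1) - z`: all its roots are simple. -/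
lemma succ_mul_pow_sub_one_ne_zero {K : Type*} [DivisionRing K] {k : ℕ} (hk : (k : K) ≠ 0) {z : K}
    (hz : z ^ (k + 1) = z) : (k + 1 : K) * z ^ k - 1 ≠ 0 := by
  have k_ne_zero : k ≠ 0 := by rintro rfl; exact hk Nat.cast_zero
  rcases eq_or_ne z 0 with rfl | hz0
  · simp [k_ne_zero]
  · have pow_eq_one : z ^ k = 1 := mul_right_cancel₀ hz0 (by rw [← pow_succ, hz, one_mul])
    simpa [pow_eq_one] using hk

namespace Incidence

open IncidenceAlgebra

section Diagonal

variable {K X : Type*} [Semiring K]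

section Preorder

variable [Preorder X] [LocallyFiniteOrder X] [DecidableEq X]

/-- Diagonal elements of the incidence algebra, as the image of the ring of functions on `X`. -/
def diagonal : (X → K) →+* IncidenceAlgebra K X where
  toFun c := ⟨fun a b => if a = b then c a else 0, fun _ _ h => if_neg fun e => h e.le⟩
  map_one' := rfl
  map_mul' c d := by
    ext a b hab
    rcases eq_or_ne a b with rfl | h
    · simp
    · simp [mul_apply, h]
  map_zero' := by ext a b; simp
  map_add' c d := by ext a b; simp [← ite_add_zero]

lemma diagonal_apply (c : X → K) (a b : X) : diagonal c a b = if a = b then c a else 0 := rfl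

lemma diagonal_mul_apply (c : X → K) (f : IncidenceAlgebra K X) (a b : X) :
    (diagonal c * f) a b = c a * f a b := by
  by_cases h : a ≤ b
  · simp [diagonal_apply, h]
  · simp [apply_eq_zero_of_not_le h]

lemma mul_diagonal_apply (c : X → K) (f : IncidenceAlgebra K X) (a b : X) :
    (f * diagonal c) a b = f a b * c b := by
  by_cases h : a ≤ b
  · simp [diagonal_apply, h]
  · simp [apply_eq_zero_of_not_le h]

end Preorder

variable [PartialOrder X] [LocallyFiniteOrder X] [DecidableEq X]

/-- The diagonal of an element of the incidence algebra; a retraction of `diagonal`. -/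
def diagonalPart : IncidenceAlgebra K X →+* (X → K) where
  toFun f x := f x x
  map_one' := by ext; simp
  map_mul' f g := by ext; simp
  map_zero' := rfl
  map_add' _ _ := rfl

@[simp] lemma diagonalPart_apply (f : IncidenceAlgebra K X) (x : X) :
    diagonalPart f x = f x x := rfl

@[simp] lemma diagonalPart_diagonal (c : X → K) : diagonalPart (diagonal c) = c := by
  ext x
  simp [diagonal_apply]

end Diagonal

section Units

variable {K X : Type*} [Ring K] [PartialOrder X] [LocallyFiniteOrder X] [DecidableEq X]

/-- The recursion solving `∑ t ∈ Icc a b, f a t * g t b = δ a b` for `g a b`. -/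
noncomputable def rightInverseFun (f : X → X → K) (a b : X) : K :=
  if a = b then Ring.inverse (f a a)
  else -Ring.inverse (f a a) * ∑ t ∈ (Ioc a b).attach,
    have : #(Icc t.1 b) < #(Icc a b) := card_lt_card <|
      Icc_ssubset_Icc_left ((mem_Ioc.1 t.2).1.le.trans (mem_Ioc.1 t.2).2) (mem_Ioc.1 t.2).1 le_rfl
    f a t * rightInverseFun f t b
termination_by #(Icc a b)

lemma rightInverseFun_eq (f : X → X → K) (a b : X) :
    rightInverseFun f a b = if a = b then Ring.inverse (f a a)
      else -Ring.inverse (f a a) * ∑ t ∈ Ioc a b, f a t * rightInverseFun f t b := by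
  rw [rightInverseFun, sum_attach (Ioc a b) fun t => f a t * rightInverseFun f t b]

/-- The right inverse of an element with invertible diagonal. On other elements it is meaningless,
since `Ring.inverse` is `0` off the units. -/
noncomputable def rightInverse (f : IncidenceAlgebra K X) : IncidenceAlgebra K X :=
  ⟨rightInverseFun f, fun a b h => by
    rw [rightInverseFun_eq, if_neg fun e => h e.le, Ioc_eq_empty fun hlt => h hlt.le, sum_empty,
      mul_zero]⟩

lemma rightInverse_apply (f : IncidenceAlgebra K X) (a b : X) :
    rightInverse f a b = if a = b then Ring.inverse (f a a)
      else -Ring.inverse (f a a) * ∑ t ∈ Ioc a b, f a t * rightInverse f t b :=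
  rightInverseFun_eq f a b

lemma mul_rightInverse {f : IncidenceAlgebra K X} (hf : ∀ x, IsUnit (f x x)) :
    f * rightInverse f = 1 := by
  ext a b hab
  rw [mul_apply, ← add_sum_Ioc_eq_sum_Icc hab, rightInverse_apply, one_apply]
  split_ifs with h
  · simp [h, Ring.mul_inverse_cancel _ (hf b)]
  · rw [← mul_assoc, mul_neg, Ring.mul_inverse_cancel _ (hf a), neg_one_mul, neg_add_cancel]

lemma isUnit_iff_isUnit_apply_self (f : IncidenceAlgebra K X) :
    IsUnit f ↔ ∀ x, IsUnit (f x x) := by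
  refine ⟨fun h x => Pi.isUnit_iff.1 (h.map diagonalPart) x, fun hf => ?_⟩
  have hf' (x : X) : IsUnit (rightInverse f x x) := by
    rw [rightInverse_apply, if_pos rfl]
    exact (hf x).ringInverse
  have eq_inv_inv : f = rightInverse (rightInverse f) :=
    left_inv_eq_right_inv (mul_rightInverse hf) (mul_rightInverse hf')
  have rightInverse_mul := mul_rightInverse hf'
  rw [← eq_inv_inv] at rightInverse_mul
  exact ⟨⟨f, rightInverse f, mul_rightInverse hf, rightInverse_mul⟩, rfl⟩

end Units

instance instFiniteIncidenceAlgebra {K X : Type*} [Zero K] [LE X] [Finite K] [Finite X] :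
    Finite (IncidenceAlgebra K X) :=
  Finite.of_injective (fun f : IncidenceAlgebra K X => (f : X → X → K)) DFunLike.coe_injective

/-- An element with nowhere vanishing diagonal amounts to one commuting with `diagonal c` together
with arbitrary entries at the discordant pairs of `c`. -/
noncomputable def concordantProdDiscordantEquiv {K X : Type*} [Zero K] [PartialOrder X]
    (c : X → K) :
    {f : IncidenceAlgebra K X // ∀ x, f x x ≠ 0} ≃
      {f : {f : IncidenceAlgebra K X // ∀ x, f x x ≠ 0} // ∀ x y, c x ≠ c y → f.1 x y = 0} ×
        ({p : X × X // p.1 < p.2 ∧ c p.1 ≠ c p.2} → K) := by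
  classical exact
  { toFun := fun f =>
      (⟨⟨⟨fun x y => if c x = c y then f.1 x y else 0,
          fun x y h => by simp [apply_eq_zero_of_not_le h]⟩,
        fun x => by simpa using f.2 x⟩, fun x y h => if_neg h⟩, fun p => f.1 p.1.1 p.1.2)
    invFun := fun g =>
      ⟨⟨fun x y => if h : x < y ∧ c x ≠ c y then g.2 ⟨(x, y), h⟩ else g.1.1.1 x y,
          fun x y h => by simp [apply_eq_zero_of_not_le h, mt le_of_lt h]⟩,
        fun x => by simpa using g.1.1.2 x⟩
    left_inv := by
      rintro ⟨f, hf⟩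
      ext x y hxy
      rcases hxy.eq_or_lt with rfl | hlt
      · simp
      · by_cases h : c x = c y <;> simp [h, hlt]
    right_inv := by
      rintro ⟨⟨⟨g, hg⟩, vanishes⟩, entries⟩
      refine Prod.ext (Subtype.ext <| Subtype.ext ?_) (funext fun p => by simp [p.2.1, p.2.2])
      ext x y _
      by_cases h : c x = c y
      · simp [h]
      · simp [h, vanishes x y h] }

section Conjugation

/-- The divided difference of `z ^ (k + 1) - z` at `f` and its diagonal part conjugates one into
the other. -/
lemma exists_eq_conj_diagonal {K X : Type*} [DivisionRing K] [PartialOrder X]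
    [LocallyFiniteOrder X] [DecidableEq X] {k : ℕ} (hk : (k : K) ≠ 0) {f : IncidenceAlgebra K X}
    (hf : f ^ (k + 1) = f) :
    ∃ u : (IncidenceAlgebra K X)ˣ, f = u * diagonal (diagonalPart f) * ↑u⁻¹ := by
  set d : IncidenceAlgebra K X := diagonal (diagonalPart f) with d_def
  have diagonalPart_pow : diagonalPart f ^ (k + 1) = diagonalPart f := by rw [← map_pow, hf]
  have hd : d ^ (k + 1) = d := by rw [d_def, ← map_pow, diagonalPart_pow]
  let w := ∑ i ∈ range (k + 1), f ^ i * d ^ (k + 1 - 1 - i) - 1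
  have intertwines : f * w = w * d := by
    have h := mul_sum_pow_sub_sum_pow_mul f d (k + 1)
    rw [hf, hd, sub_eq_sub_iff_sub_eq_sub] at h
    rwa [mul_sub, sub_mul, mul_one, one_mul]
  have diagonalPart_w : diagonalPart w = (k + 1 : X → K) * diagonalPart f ^ k - 1 := by
    simp only [w, Nat.add_sub_cancel, map_sub, map_sum, map_mul, map_pow, map_one, d_def,
      diagonalPart_diagonal]
    rw [sum_congr rfl fun i hi => pow_mul_pow_sub _ (Nat.le_of_lt_succ (mem_range.1 hi))]
    simp
  have w_isUnit : IsUnit w := (isUnit_iff_isUnit_apply_self w).2 fun x => by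
    rw [← diagonalPart_apply, diagonalPart_w, isUnit_iff_ne_zero]
    exact succ_mul_pow_sub_one_ne_zero hk (congrFun diagonalPart_pow x)
  obtain ⟨u, hu⟩ := w_isUnit
  exact ⟨u, (Units.eq_mul_inv_iff_mul_eq u).2 (hu ▸ intertwines)⟩

variable {K X : Type*} [Field K] [PartialOrder X] [LocallyFiniteOrder X] [DecidableEq X]

lemma mem_orbit_diagonal_iff {k : ℕ} (hk : (k : K) ≠ 0) {c : X → K} (hc : c ^ (k + 1) = c)
    (f : IncidenceAlgebra K X) :
    f ∈ MulAction.orbit (ConjAct (IncidenceAlgebra K X)ˣ) (diagonal c) ↔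
      f ^ (k + 1) = f ∧ diagonalPart f = c := by
  constructor
  · rintro ⟨u, rfl⟩
    refine ⟨?_, ?_⟩
    · change (u • diagonal c) ^ (k + 1) = u • diagonal c
      rw [← smul_pow', ← map_pow, hc]
    · change diagonalPart (u • diagonal c) = c
      rw [ConjAct.units_smul_def, map_mul, map_mul, mul_right_comm, ← map_mul, Units.mul_inv,
        map_one, one_mul, diagonalPart_diagonal]
  · rintro ⟨hf, rfl⟩
    obtain ⟨u, hu⟩ := exists_eq_conj_diagonal hk hf
    exact ⟨ConjAct.toConjAct u, hu.symm⟩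

/-- Units of the incidence algebra as elements with nowhere vanishing diagonal, the units being
regarded as the group acting by conjugation. -/
noncomputable def conjActUnitsEquiv :
    ConjAct (IncidenceAlgebra K X)ˣ ≃ {f : IncidenceAlgebra K X // ∀ x, f x x ≠ 0} :=
  ConjAct.ofConjAct.toEquiv.trans <| Submonoid.unitsTypeEquivIsUnitSubmonoid.toEquiv.trans <|
    Equiv.subtypeEquivRight fun f => by
      simp only [IsUnit.mem_submonoid_iff, isUnit_iff_isUnit_apply_self, isUnit_iff_ne_zero]

lemma mem_stabilizer_diagonal_iff (c : X → K) (u : ConjAct (IncidenceAlgebra K X)ˣ) :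
    u ∈ MulAction.stabilizer _ (diagonal c : IncidenceAlgebra K X) ↔
      ∀ x y, c x ≠ c y → (conjActUnitsEquiv u).1 x y = 0 := by
  change _ ↔ ∀ x y, c x ≠ c y →
    ((ConjAct.ofConjAct u : (IncidenceAlgebra K X)ˣ) : IncidenceAlgebra K X) x y = 0
  rw [MulAction.mem_stabilizer_iff, ConjAct.units_smul_def, Units.mul_inv_eq_iff_eq_mul]
  constructor
  · intro commutes x y hxy
    have entry := congrFun (DFunLike.congr_fun commutes x) y
    rw [mul_diagonal_apply, diagonal_mul_apply, mul_comm, mul_eq_mul_right_iff] at entry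
    exact entry.resolve_left hxy.symm
  · intro vanishes
    ext x y _
    rw [mul_diagonal_apply, diagonal_mul_apply, mul_comm]
    by_cases hxy : c x = c y
    · rw [hxy]
    · rw [vanishes x y hxy, mul_zero, mul_zero]

/-- Orbit–stabilizer: entries at discordant pairs are exactly what the stabilizer lacks. -/
lemma card_orbit_diagonal [Finite K] [Finite X] (c : X → K) :
    Nat.card (MulAction.orbit (ConjAct (IncidenceAlgebra K X)ˣ)
        (diagonal c : IncidenceAlgebra K X)) = Nat.card K ^ discordantPairs c := by
  let G := ConjAct (IncidenceAlgebra K X)ˣ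
  let d : IncidenceAlgebra K X := diagonal c
  have : Finite G := Finite.of_equiv _ conjActUnitsEquiv.symm
  have stabilizerEquiv : MulAction.stabilizer G d ≃
      {f : {f : IncidenceAlgebra K X // ∀ x, f x x ≠ 0} // ∀ x y, c x ≠ c y → f.1 x y = 0} :=
    conjActUnitsEquiv.subtypeEquiv fun u => mem_stabilizer_diagonal_iff c u
  refine Nat.eq_of_mul_eq_mul_right (Nat.card_pos (α := MulAction.stabilizer G d)) ?_
  calc Nat.card (MulAction.orbit G d) * Nat.card (MulAction.stabilizer G d)
      = Nat.card G := by
        rw [← Nat.card_prod, Nat.card_congr (MulAction.orbitProdStabilizerEquivGroup G d)]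
    _ = Nat.card (MulAction.stabilizer G d) * Nat.card K ^ discordantPairs c := by
        rw [Nat.card_congr (conjActUnitsEquiv.trans (concordantProdDiscordantEquiv c)),
          Nat.card_prod, Nat.card_fun, ← Nat.card_congr stabilizerEquiv, discordantPairs]
    _ = Nat.card K ^ discordantPairs c * Nat.card (MulAction.stabilizer G d) := mul_comm _ _

end Conjugation

theorem card_potent_eq_sum_pow_discordantPairs {K X : Type*} [Field K] [Fintype K] [DecidableEq K]
    [PartialOrder X] [LocallyFiniteOrder X] [DecidableEq X] [Fintype X] {k : ℕ}
    (hk : (k : K) ≠ 0) :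
    Nat.card {f : IncidenceAlgebra K X // f ^ (k + 1) = f} =
      ∑ c : X → {z : K // z ^ (k + 1) = z}, Fintype.card K ^ discordantPairs c := by
  have diagonalPart_pow (f : {f : IncidenceAlgebra K X // f ^ (k + 1) = f}) :
      diagonalPart f.1 ^ (k + 1) = diagonalPart f.1 := by rw [← map_pow, f.2]
  let D (f : {f : IncidenceAlgebra K X // f ^ (k + 1) = f}) (x : X) : {z : K // z ^ (k + 1) = z} :=
    ⟨diagonalPart f.1 x, congrFun (diagonalPart_pow f) x⟩
  rw [Nat.card_congr (Equiv.sigmaFiberEquiv D).symm, Nat.card_sigma]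
  refine sum_congr rfl fun c _ => ?_
  let c' : X → K := Subtype.val ∘ c
  have mem_orbit := mem_orbit_diagonal_iff hk (c := c') (funext fun x => (c x).2)
  have D_eq_iff (f) : D f = c ↔ diagonalPart f.1 = c' := by
    simp [funext_iff, Subtype.ext_iff, D, c']
  rw [← discordantPairs_comp_of_injective Subtype.val_injective, ← Nat.card_eq_fintype_card,
    ← card_orbit_diagonal]
  exact Nat.card_congr <| (Equiv.subtypeEquivRight D_eq_iff).trans <|
    (Equiv.subtypeSubtypeEquivSubtypeInter _ _).trans <|
      Equiv.subtypeEquivRight fun f => (mem_orbit f).symm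

section Matrix

variable {K X : Type*} [Semiring K] [Preorder X] [LocallyFiniteOrder X] [DecidableEq X] [Fintype X]

/-- The incidence algebra of a finite poset as a ring of matrices. -/
def toMatrix : IncidenceAlgebra K X →+* Matrix X X K where
  toFun f := Matrix.of f
  map_one' := by ext a b; simp [Matrix.one_apply]
  map_mul' f g := by
    ext a b
    rw [Matrix.mul_apply, Matrix.of_apply, mul_apply]
    refine sum_subset (subset_univ _) fun t _ ht => ?_
    rw [mem_Icc, not_and_or] at ht
    rcases ht with h | h
    · rw [apply_eq_zero_of_not_le h, zero_mul]
    · rw [apply_eq_zero_of_not_le h g, mul_zero]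
  map_zero' := rfl
  map_add' _ _ := rfl

lemma toMatrix_injective :
    Function.Injective (toMatrix : IncidenceAlgebra K X →+* Matrix X X K) :=
  fun _ _ h => DFunLike.coe_injective (Matrix.of.injective h)

lemma card_potent_eq_card_matrix (r : ℕ) :
    Nat.card {f : IncidenceAlgebra K X // f ^ r = f} =
      Nat.card {A : Matrix X X K // A ^ r = A ∧ ∀ i j, ¬ i ≤ j → A i j = 0} :=
  Nat.card_congr
    { toFun := fun f => ⟨toMatrix f.1, by rw [← map_pow, f.2],
        fun _ _ h => apply_eq_zero_of_not_le h f.1⟩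
      invFun := fun A => ⟨⟨A.1, A.2.2⟩, toMatrix_injective (by rw [map_pow]; exact A.2.1)⟩
      left_inv := fun _ => rfl
      right_inv := fun _ => rfl }

end Matrix

end Incidence

theorem stmt_12_general {K A B X : Type*} [Field K] [Fintype K] [DecidableEq K]
    [PartialOrder A] [OrderBot A] [Fintype A] [DecidableEq A] [LinearOrder B] [Fintype B]
    [PartialOrder X] [DecidableEq X] [LocallyFiniteOrder X] {x : A → X} {y : B → X}
    (h : IsStarPoset x y) {k s : ℕ} (hk : (k : K) ≠ 0) (hs : #{z : K | z ^ (k + 1) = z} = s)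
    (z : Fin s) :
    Nat.card {f : IncidenceAlgebra K X // f ^ (k + 1) = f} =
      Nat.card {M : Matrix A A K // M ^ (k + 1) = M ∧ ∀ i j, ¬ i ≤ j → M i j = 0} *
        ∑ v ∈ Finset.Nat.antidiagonalTuple s (Fintype.card B),
          Nat.multinomial univ v * Fintype.card K ^ (∑ i, ∑ j ∈ Ioi i, v i * v j) *
            Fintype.card K ^ (∑ j with j ≠ z, v j) := by
  classical
  let : Fintype X := Fintype.ofEquiv _ h.sumEquiv
  let : LocallyFiniteOrder A := Fintype.toLocallyFiniteOrder
  have card_scalars : Fintype.card {z : K // z ^ (k + 1) = z} = s := by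
    rw [Fintype.card_subtype, hs]
  rw [← Incidence.card_potent_eq_card_matrix, Incidence.card_potent_eq_sum_pow_discordantPairs hk,
    Incidence.card_potent_eq_sum_pow_discordantPairs hk, h.sum_pow_discordantPairs, sum_mul]
  exact sum_congr rfl fun a _ =>
    congrArg _ (sum_pow_discordantPairs _ card_scalars z (a ⊥))

/-- Counting `(k+1)`-potent elements of the incidence algebra of the star poset
`X = {x₀, x₁, …, x_n, y₁, …, y_m}` (two chains glued at the minimum `x₀`, indexed here by
`x : Fin (n+1) → X` with `x 0 = x₀`, and `y : Fin m → X`): their number equals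
`N(n+1) · P(m)` where `N(n+1)` is the number of `(n+1)×(n+1)` upper triangular
`(k+1)`-potent matrices over `K` and
`P(m) = ∑_{m₁+⋯+m_s = m} (m!/(m₁!⋯m_s!)) · q^(∑_{i<j} m_i m_j) · q^(m₂+⋯+m_s)`. -/
theorem stmt_12 {K : Type*} [Field K] [Fintype K] [DecidableEq K] (q k s n m : ℕ)
    (hq : Fintype.card K = q) (hk : 1 ≤ k)
    (hchar_k : (k : K) ≠ 0) (hchar_k1 : ((k + 1 : ℕ) : K) ≠ 0)
    (hs : (Finset.univ.filter (fun x : K => x ^ (k + 1) = x)).card = s) (hs0 : 0 < s)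
    (X : Type*) [Fintype X] [PartialOrder X] [DecidableEq X] [LocallyFiniteOrder X]
    (x : Fin (n + 1) → X) (y : Fin m → X)
    (hxx : ∀ i j, x i ≤ x j ↔ i ≤ j)
    (hyy : ∀ i j, y i ≤ y j ↔ i ≤ j)
    (hxy : ∀ i j, x i ≤ y j ↔ i = 0)
    (hyx : ∀ i j, ¬ y j ≤ x i)
    (hxinj : Function.Injective x) (hyinj : Function.Injective y)
    (hne : ∀ i j, x i ≠ y j)
    (hcover : ∀ w : X, (∃ i, w = x i) ∨ (∃ j, w = y j)) :
    Nat.card {f : IncidenceAlgebra K X // f ^ (k + 1) = f}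
      = Nat.card {A : Matrix (Fin (n + 1)) (Fin (n + 1)) K //
            A ^ (k + 1) = A ∧ ∀ i j : Fin (n + 1), j < i → A i j = 0}
        * ∑ v ∈ Finset.Nat.antidiagonalTuple s m,
            Nat.multinomial Finset.univ v *
              q ^ (∑ i : Fin s, ∑ j ∈ Finset.Ioi i, v i * v j) *
              q ^ (∑ j ∈ Finset.univ.filter (fun j : Fin s => j ≠ ⟨0, hs0⟩), v j) := by
  simpa only [not_le, Fintype.card_fin, hq] using
    stmt_12_general ⟨hxx, hyy, hxy, hyx, hcover⟩ hchar_k hs ⟨0, hs0⟩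
end

section
/- Let K be a finite field with q elements whose characteristic divides neither k nor k+1 (k ≥ 1), and let s be the number of elements x ∈ K with x^(k+1) = x. Let X be the rhombus poset on {x₀, x₁, …, x_n, x_{n+1}, y₁, …, y_m} with relations: x₀ ≤ x₁ ≤ ⋯ ≤ x_n ≤ x_{n+1}; y₁ ≤ y₂ ≤ ⋯ ≤ y_m; x₀ ≤ y₁ and y_m ≤ x_{n+1}; and no x_i with 1 ≤ i ≤ n is comparable with any y_j. Then the number of elements f of the incidence algebra I(X, K) satisfying f^(k+1) = f equals Σ s · (n!/(n₁!⋯n_s!)) · (m!/(m₁!⋯m_s!)) · q^(Σ_{1 ≤ i < j ≤ s} (n_i·n_j + m_i·m_j)) · F(n₁,…,n_s,m₁,…,m_s), where the sum ranges over all tuples of natural numbers (n₁,…,n_s) with n₁+⋯+n_s = n and (m₁,…,m_s) with m₁+⋯+m_s = m, and F(n₁,…,n_s,m₁,…,m_s) = q^(2(n−n₁+m−m₁)) + Σ_{j=2}^{s} q^(2(n+m)+1−(n₁+n_j+m₁+m_j)). -/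
/-!
If `f ^ (k + 1) = f`, the diagonal part of `f` is a labelling `d` of `X` by roots of
`x ^ (k + 1) = x`. Writing `D` for the diagonal element with diagonal `d`, the element
`∑ i ≤ k, f ^ i * D ^ (k - i) - 1` intertwines `D` with `f`; its diagonal entries are `k` or `-1`,
so it is invertible, and after rescaling it exhibits `f` as a conjugate of `D` by a unitriangular
element. The `f` with diagonal part `d` therefore form the orbit of `D` under the unitriangular
group, and orbit-stabilizer counts them: there are `q ^ N`, where `N` is the number of pairs
`a < b` with `d a ≠ d b`. On the rhombus, `N` depends only on the labels of the two extreme elements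
and on how often each label occurs on each of the two chains; a given pair of label counts is
realized by a product of two multinomial coefficients, and all labels of `x₀` contribute equally.
-/

open Finset MulAction

section Intertwiner

variable {R : Type*} [Ring R]

-- The two sums telescope: both equal `∑ i ≤ k + 1, f ^ i * e ^ (k + 1 - i)`.
theorem mul_sum_pow_mul_pow_add_pow (f e : R) (k : ℕ) :
    f * (∑ i ∈ range (k + 1), f ^ i * e ^ (k - i)) + e ^ (k + 1) =
      (∑ i ∈ range (k + 1), f ^ i * e ^ (k - i)) * e + f ^ (k + 1) := by
  have left : f * (∑ i ∈ range (k + 1), f ^ i * e ^ (k - i)) + e ^ (k + 1) =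
      ∑ i ∈ range (k + 2), f ^ i * e ^ (k + 1 - i) := by
    rw [sum_range_succ' _ (k + 1), mul_sum]
    simp [pow_succ', mul_assoc]
  have right : (∑ i ∈ range (k + 1), f ^ i * e ^ (k - i)) * e + f ^ (k + 1) =
      ∑ i ∈ range (k + 2), f ^ i * e ^ (k + 1 - i) := by
    rw [sum_range_succ _ (k + 1), sum_mul, Nat.sub_self, pow_zero, mul_one]
    congr 1
    refine sum_congr rfl fun i hi => ?_
    rw [Nat.succ_sub (mem_range_succ_iff.1 hi), pow_succ, mul_assoc]
  rw [left, right]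

theorem semiconjBy_sum_pow_mul_pow_sub_one {f e : R} {k : ℕ} (hf : f ^ (k + 1) = f)
    (he : e ^ (k + 1) = e) :
    SemiconjBy (∑ i ∈ range (k + 1), f ^ i * e ^ (k - i) - 1) e f := by
  have h := mul_sum_pow_mul_pow_add_pow f e k
  rw [hf, he] at h
  rw [SemiconjBy, sub_mul, mul_sub, one_mul, mul_one, sub_eq_sub_iff_add_eq_add, h]

end Intertwiner

section Diagonal

variable {R X : Type*} [PartialOrder X] [LocallyFiniteOrder X] [DecidableEq X]

section Semiring

variable [Semiring R]

/-- Restriction of an element of the incidence algebra to the pairs `(a, a)`. -/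
def diagonalPart : IncidenceAlgebra R X →+* (X → R) where
  toFun f a := f a a
  map_one' := by ext; simp
  map_mul' f g := by ext; simp
  map_zero' := rfl
  map_add' _ _ := rfl

@[simp]
theorem diagonalPart_apply (f : IncidenceAlgebra R X) (a : X) : diagonalPart f a = f a a := rfl

/-- The element of the incidence algebra with prescribed diagonal entries which vanishes off the
diagonal. It is a section of `diagonalPart`. -/
def diagonalElement : (X → R) →+* IncidenceAlgebra R X where
  toFun d := ⟨fun a b => if a = b then d a else 0, fun _ _ h => if_neg fun e => h e.le⟩
  map_one' := by ext; simp
  map_mul' c d := by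
    ext a b _
    by_cases h : a = b <;> simp [h]
  map_zero' := by ext; simp
  map_add' c d := by
    ext a b _
    by_cases h : a = b <;> simp [h]

theorem diagonalElement_apply (d : X → R) (a b : X) :
    diagonalElement d a b = if a = b then d a else 0 := rfl

@[simp]
theorem diagonalPart_diagonalElement (d : X → R) : diagonalPart (diagonalElement d) = d := by
  ext a
  simp [diagonalElement_apply]

theorem diagonalElement_mul_apply (d : X → R) (f : IncidenceAlgebra R X) (a b : X) :
    (diagonalElement d * f) a b = d a * f a b := by
  by_cases hab : a ≤ b
  · simp [diagonalElement_apply, hab]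
  · simp [IncidenceAlgebra.apply_eq_zero_of_not_le hab]

theorem mul_diagonalElement_apply (f : IncidenceAlgebra R X) (d : X → R) (a b : X) :
    (f * diagonalElement d) a b = f a b * d b := by
  by_cases hab : a ≤ b
  · simp [diagonalElement_apply, hab]
  · simp [IncidenceAlgebra.apply_eq_zero_of_not_le hab]

theorem pow_apply_eq_zero_of_card_Icc_le {f : IncidenceAlgebra R X} (hf : diagonalPart f = 0)
    {r : ℕ} {a b : X} (h : #(Icc a b) ≤ r) : (f ^ r) a b = 0 := by
  induction r generalizing b with
  | zero =>
    exact IncidenceAlgebra.apply_eq_zero_of_not_le (by simpa using h) _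
  | succ r ih =>
    rw [pow_succ, IncidenceAlgebra.mul_apply]
    refine sum_eq_zero fun t ht => ?_
    obtain ⟨hat, htb⟩ := mem_Icc.1 ht
    obtain rfl | htb := htb.eq_or_lt
    · rw [← diagonalPart_apply f, hf, Pi.zero_apply, mul_zero]
    · have hlt : #(Icc a t) < #(Icc a b) :=
        card_lt_card (Icc_ssubset_Icc_right (hat.trans htb.le) le_rfl htb)
      rw [ih (by omega), zero_mul]

theorem isNilpotent_of_diagonalPart_eq_zero [Finite X] {f : IncidenceAlgebra R X}
    (hf : diagonalPart f = 0) : IsNilpotent f := by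
  have := Fintype.ofFinite X
  exact ⟨Fintype.card X, IncidenceAlgebra.ext fun a b _ =>
    pow_apply_eq_zero_of_card_Icc_le hf (card_le_univ _)⟩

end Semiring

theorem isUnit_iff_isUnit_diagonalPart [Ring R] [Finite X] {u : IncidenceAlgebra R X} :
    IsUnit u ↔ IsUnit (diagonalPart u) := by
  refine ⟨fun h => h.map _, fun h => ?_⟩
  set D := Units.map (diagonalElement (X := X)).toMonoidHom h.unit
  have hD : diagonalPart (D : IncidenceAlgebra R X) = diagonalPart u := by simp [D]
  have hnil : IsNilpotent (↑D⁻¹ * u - 1) := isNilpotent_of_diagonalPart_eq_zero <| by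
    rw [map_sub, map_mul, ← hD, ← map_mul, Units.inv_mul, map_one, sub_self]
  simpa using hnil.isUnit_add_one

theorem commute_diagonalElement_iff [CommSemiring R] [IsCancelMulZero R]
    {z : IncidenceAlgebra R X} {d : X → R} :
    Commute z (diagonalElement d) ↔ ∀ a b, z a b ≠ 0 → d a = d b := by
  have entry (a b : X) : z a b * d b = d a * z a b ↔ (z a b ≠ 0 → d a = d b) := by
    rw [mul_comm, mul_eq_mul_right_iff, or_comm, eq_comm (a := d b), ← or_iff_not_imp_left]
  simp only [← entry, ← mul_diagonalElement_apply, ← diagonalElement_mul_apply]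
  exact ⟨fun h a b => by rw [h.eq], fun h => IncidenceAlgebra.ext fun a b _ => h a b⟩

end Diagonal

section Unitriangular

variable {R K X : Type*} [PartialOrder X] [LocallyFiniteOrder X] [DecidableEq X]

variable (R X) in
/-- The group of elements of the incidence algebra with all diagonal entries `1`, as a subgroup of
the group which acts on the incidence algebra by conjugation. -/
def unitriangular [Semiring R] : Subgroup (ConjAct (IncidenceAlgebra R X)ˣ) :=
  ((Units.map (diagonalPart (R := R) (X := X)).toMonoidHom).comp
    (ConjAct.ofConjAct (G := (IncidenceAlgebra R X)ˣ)).toMonoidHom).ker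

theorem mem_unitriangular [Semiring R] {u : ConjAct (IncidenceAlgebra R X)ˣ} :
    u ∈ unitriangular R X ↔
      diagonalPart (ConjAct.ofConjAct u : (IncidenceAlgebra R X)ˣ).val = 1 :=
  Units.ext_iff

theorem unitriangular_smul_eq_iff [Semiring R] {u : unitriangular R X}
    {e f : IncidenceAlgebra R X} :
    u • e = f ↔ SemiconjBy (ConjAct.ofConjAct u.1).val e f := by
  rw [Subgroup.smul_def, ConjAct.units_smul_def, Units.mul_inv_eq_iff_eq_mul, SemiconjBy]

variable (R X) in
/-- Elements with all diagonal entries `1` are units, so they are the members of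
`unitriangular R X`. -/
noncomputable def unitriangularEquiv [Ring R] [Finite X] :
    unitriangular R X ≃ {z : IncidenceAlgebra R X // diagonalPart z = 1} :=
  Equiv.ofBijective (fun u => ⟨(ConjAct.ofConjAct u.1).val, mem_unitriangular.1 u.2⟩) <| by
    refine ⟨fun u v h => Subtype.ext (Units.ext (congrArg Subtype.val h)), fun ⟨z, hz⟩ => ?_⟩
    have hunit : IsUnit z := isUnit_iff_isUnit_diagonalPart.2 (hz ▸ isUnit_one)
    exact ⟨⟨ConjAct.toConjAct hunit.unit, mem_unitriangular.2 hz⟩, rfl⟩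

theorem exists_unitriangular_smul_eq [Field K] [Finite X] {k : ℕ} (hk : (k : K) ≠ 0)
    {f : IncidenceAlgebra K X} (hf : f ^ (k + 1) = f) :
    ∃ u : unitriangular K X, u • diagonalElement (diagonalPart f) = f := by
  set d := diagonalPart f
  have hd : d ^ (k + 1) = d := by rw [← map_pow, hf]
  have hD : diagonalElement d ^ (k + 1) = diagonalElement d := by rw [← map_pow, hd]
  set w := ∑ i ∈ range (k + 1), f ^ i * diagonalElement d ^ (k - i) - 1
  have hw : diagonalPart w = (k + 1) * d ^ k - 1 := by
    have hterm : ∀ i ∈ range (k + 1), d ^ i * d ^ (k - i) = d ^ k := fun i hi => by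
      rw [← pow_add, Nat.add_sub_cancel' (mem_range_succ_iff.1 hi)]
    simp [w, d, sum_congr rfl hterm]
  have hw_ne (a : X) : diagonalPart w a ≠ 0 := by
    have hk0 : k ≠ 0 := by rintro rfl; simp at hk
    have ha : d a ^ k * d a = d a := by rw [← pow_succ]; exact congrFun hd a
    rw [hw]
    rcases mul_left_eq_self₀.1 ha with h | h <;> simp [h, hk0, hk]
  obtain ⟨u, hu⟩ := (unitriangularEquiv K X).surjective
    ⟨w * diagonalElement (diagonalPart w)⁻¹, by
      rw [map_mul, diagonalPart_diagonalElement]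
      exact funext fun a => mul_inv_cancel₀ (hw_ne a)⟩
  refine ⟨u, unitriangular_smul_eq_iff.2 ?_⟩
  change SemiconjBy (unitriangularEquiv K X u).val _ _
  rw [hu]
  exact (semiconjBy_sum_pow_mul_pow_sub_one hf hD).mul_left ((Commute.all _ d).map diagonalElement)

theorem orbit_unitriangular_diagonalElement [Field K] [Finite X] {k : ℕ} (hk : (k : K) ≠ 0)
    {d : X → K} (hd : d ^ (k + 1) = d) :
    orbit (unitriangular K X) (diagonalElement d) =
      {f | f ^ (k + 1) = f ∧ diagonalPart f = d} := by
  ext f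
  constructor
  · rintro ⟨u, rfl⟩
    have semiconj := unitriangular_smul_eq_iff (u := u) (e := diagonalElement d).1 rfl
    constructor
    · change (u • diagonalElement d) ^ (k + 1) = u • diagonalElement d
      rw [← smul_pow', ← map_pow, hd]
    · have diagonal_eq := congrArg diagonalPart semiconj.eq
      simpa [mem_unitriangular.1 u.2] using diagonal_eq.symm
  · rintro ⟨hf, rfl⟩
    exact exists_unitriangular_smul_eq hk hf

/-- A unitriangular element supported on pairs of equally labelled elements is freely determined by
its entries above the diagonal. -/
def unitriangularSupportedEquiv [Semiring R] {T : Type*} (d : X → T) [DecidableEq T]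
    [DecidableLT X] :
    {z : IncidenceAlgebra R X // diagonalPart z = 1 ∧ ∀ a b, z a b ≠ 0 → d a = d b} ≃
      ({p : X × X // p.1 < p.2 ∧ d p.1 = d p.2} → R) where
  toFun z p := z.1 p.1.1 p.1.2
  invFun g := ⟨1 + ⟨fun a b => if h : a < b ∧ d a = d b then g ⟨(a, b), h⟩ else 0,
      fun a b h => dif_neg fun h' => h h'.1.le⟩, by ext; simp, fun a b => by
        by_cases a = b <;> simp_all⟩
  left_inv := by
    rintro ⟨z, hz, hsupp⟩
    ext a b hab
    obtain rfl | hlt := hab.eq_or_lt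
    · simpa using (congrFun hz a).symm
    · by_cases h : d a = d b
      · simp [hlt, hlt.ne, h]
      · simp [hlt.ne, h, not_imp_comm.1 (hsupp a b) h]
  right_inv g := by
    ext ⟨p, hp⟩
    simp [hp, hp.1.ne]

theorem card_stabilizer_diagonalElement [Field K] [Fintype K] [Fintype X] [DecidableLT X]
    [DecidableEq K] (d : X → K) :
    Nat.card (stabilizer (unitriangular K X) (diagonalElement d)) =
      Fintype.card K ^ #{p : X × X | p.1 < p.2 ∧ d p.1 = d p.2} := by
  have mem_iff (u : unitriangular K X) : u ∈ stabilizer (unitriangular K X) (diagonalElement d) ↔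
      ∀ a b, (unitriangularEquiv K X u).val a b ≠ 0 → d a = d b :=
    unitriangular_smul_eq_iff.trans
      (commute_diagonalElement_iff (z := (unitriangularEquiv K X u).1))
  have e : stabilizer (unitriangular K X) (diagonalElement d) ≃
      {z : IncidenceAlgebra K X // diagonalPart z = 1 ∧ ∀ a b, z a b ≠ 0 → d a = d b} :=
    ((unitriangularEquiv K X).subtypeEquiv mem_iff).trans
      (Equiv.subtypeSubtypeEquivSubtypeInter _
        fun z : IncidenceAlgebra K X => ∀ a b, z a b ≠ 0 → d a = d b)
  rw [Nat.card_congr (e.trans (unitriangularSupportedEquiv d)), Nat.card_eq_fintype_card,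
    Fintype.card_fun, Fintype.card_subtype]

theorem card_unitriangular [Field K] [Fintype K] [Fintype X] [DecidableLT X] :
    Nat.card (unitriangular K X) = Fintype.card K ^ #{p : X × X | p.1 < p.2} := by
  classical
  have h := card_stabilizer_diagonalElement (0 : X → K)
  have htop : stabilizer (unitriangular K X) (diagonalElement (0 : X → K)) = ⊤ := by
    ext u
    simp [mem_stabilizer_iff]
  simpa [htop] using h

end Unitriangular

section LetterCount

variable {α T : Type*} [Fintype α] [DecidableEq T]

/-- The number of occurrences of each letter in the word `a`. -/
def letterCount (a : α → T) (c : T) : ℕ := #{i | a i = c}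

theorem card_ne_eq_card_sub_letterCount (a : α → T) (c : T) :
    #{i | a i ≠ c} = Fintype.card α - letterCount a c := by
  classical
  rw [filter_not, ← compl_eq_univ_sdiff, card_compl, letterCount]

theorem prod_comp_eq_prod_pow_letterCount [Fintype T] {M : Type*} [CommMonoid M]
    (a : α → T) (f : T → M) :
    ∏ i, f (a i) = ∏ c, f c ^ letterCount a c := by
  rw [← prod_fiberwise univ a]
  exact prod_congr rfl fun c _ => prod_eq_pow_card fun i hi => by rw [(mem_filter.1 hi).2]

-- Both sides are images of `(∑ c, X c) ^ card α` under the linear functional sending the monomial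
-- with exponent `v` to `g v`: expand the power into words, or by the multinomial theorem.
theorem sum_comp_letterCount [DecidableEq α] [Fintype T] {M : Type*} [AddCommMonoid M]
    (g : (T → ℕ) → M) :
    ∑ a : α → T, g (letterCount a) =
      ∑ v ∈ piAntidiag univ (Fintype.card α), Nat.multinomial univ v • g v := by
  let L : MvPolynomial T ℕ →ₗ[ℕ] M := (MvPolynomial.basisMonomials T ℕ).constr ℕ fun v => g v
  have L_prod (v : T → ℕ) : L (∏ c, MvPolynomial.X c ^ v c) = g v := by
    have := (MvPolynomial.basisMonomials T ℕ).constr_basis ℕ (fun v => g v)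
      (Finsupp.equivFunOnFinite.symm v)
    rw [MvPolynomial.coe_basisMonomials] at this
    simpa [MvPolynomial.monomial_eq, Finsupp.prod_fintype] using this
  have words : (∑ c, MvPolynomial.X c : MvPolynomial T ℕ) ^ Fintype.card α =
      ∑ a : α → T, ∏ c, MvPolynomial.X c ^ letterCount a c := by
    simp_rw [← prod_comp_eq_prod_pow_letterCount]
    rw [← card_univ, ← prod_const, prod_univ_sum, Fintype.piFinset_univ]
  have h := congrArg L (words.symm.trans (sum_pow_eq_sum_piAntidiag univ _ _))
  simpa only [map_sum, L_prod, ← nsmul_eq_mul, map_nsmul] using h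

theorem sum_comp_letterCount_inl_inr {β : Type*} [Fintype β] [DecidableEq α] [DecidableEq β]
    [Fintype T] {M : Type*} [AddCommMonoid M] (g : (T → ℕ) → (T → ℕ) → M) :
    ∑ d : α ⊕ β → T, g (letterCount (d ∘ Sum.inl)) (letterCount (d ∘ Sum.inr)) =
      ∑ v ∈ piAntidiag univ (Fintype.card α), ∑ w ∈ piAntidiag univ (Fintype.card β),
        (Nat.multinomial univ v * Nat.multinomial univ w) • g v w := by
  calc
    _ = ∑ a : α → T, ∑ b : β → T, g (letterCount a) (letterCount b) :=
      ((Equiv.sumArrowEquivProdArrow α β T).sum_comp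
        fun p => g (letterCount p.1) (letterCount p.2)).trans (Fintype.sum_prod_type _)
    _ = _ := by
      simp only [sum_comp_letterCount (g _), mul_smul, ← smul_sum]
      exact sum_comp_letterCount fun v => ∑ w ∈ _, Nat.multinomial univ w • g v w

end LetterCount

section LabelChanges

variable {P Q T : Type*} [Fintype P] [Fintype Q] [DecidableEq T]

/-- The number of strictly comparable pairs `a < b` to which the labelling `d` gives different
labels. -/
def labelChanges [LT P] [DecidableLT P] (d : P → T) : ℕ :=
  #{p : P × P | p.1 < p.2 ∧ d p.1 ≠ d p.2}

theorem labelChanges_eq_sum [LT P] [DecidableLT P] (d : P → T) :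
    labelChanges d = ∑ a, ∑ b, if a < b ∧ d a ≠ d b then 1 else 0 := by
  rw [labelChanges, card_filter, Fintype.sum_prod_type]

theorem labelChanges_comp_orderIso [Preorder P] [DecidableLT P] [Preorder Q] [DecidableLT Q]
    (e : P ≃o Q) (d : Q → T) : labelChanges (d ∘ e) = labelChanges d :=
  card_equiv (e.toEquiv.prodCongr e.toEquiv) fun p => by simp

theorem labelChanges_comp_injective [LT P] [DecidableLT P] {S : Type*} [DecidableEq S]
    {φ : T → S} (hφ : φ.Injective) (d : P → T) : labelChanges (φ ∘ d) = labelChanges d := by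
  simp [labelChanges, hφ.eq_iff]

theorem sum_withBot {M : Type*} [AddCommMonoid M] (f : WithBot P → M) :
    ∑ a, f a = f ⊥ + ∑ a : P, f a :=
  Fintype.sum_option f

theorem sum_withTop {M : Type*} [AddCommMonoid M] (f : WithTop P → M) :
    ∑ a, f a = f ⊤ + ∑ a : P, f a :=
  Fintype.sum_option f

theorem labelChanges_withBot [Preorder P] [DecidableLT P] [DecidableLT (WithBot P)]
    (d : WithBot P → T) :
    labelChanges d = #{a : P | d a ≠ d ⊥} + labelChanges fun a : P => d a := by
  simp [labelChanges_eq_sum, card_filter, sum_withBot, eq_comm, -sum_boole]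

theorem labelChanges_withTop [Preorder P] [DecidableLT P] [DecidableLT (WithTop P)]
    (d : WithTop P → T) :
    labelChanges d = #{a : P | d a ≠ d ⊤} + labelChanges fun a : P => d a := by
  simp [labelChanges_eq_sum, card_filter, sum_withTop, sum_add_distrib, -sum_boole]

theorem labelChanges_sum [Preorder P] [DecidableLT P] [Preorder Q] [DecidableLT Q]
    [DecidableLT (P ⊕ Q)] (d : P ⊕ Q → T) :
    labelChanges d = labelChanges (d ∘ Sum.inl) + labelChanges (d ∘ Sum.inr) := by
  simp [labelChanges_eq_sum, -sum_boole]

theorem labelChanges_eq_card_label_lt [LinearOrder P] [LinearOrder T] (d : P → T) :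
    labelChanges d = #{p : P × P | d p.1 < d p.2} := by
  have swap : #{p : P × P | p.1 < p.2 ∧ d p.2 < d p.1} =
      #{p : P × P | d p.1 < d p.2 ∧ ¬ p.1 < p.2} :=
    card_equiv (Equiv.prodComm P P) fun p => by
      simp only [mem_filter_univ, Equiv.prodComm_apply, Prod.fst_swap, Prod.snd_swap, and_comm]
      exact and_congr_left fun h => by
        rw [not_lt, le_iff_lt_or_eq, or_iff_left fun e => h.ne (congrArg d e.symm)]
  simp_rw [labelChanges, ne_iff_lt_or_gt, and_or_left, filter_or]
  rw [card_union_of_disjoint (by grind [disjoint_left]), swap]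
  simp_rw [and_comm (a := _ < _) (b := d _ < _), ← filter_filter]
  exact card_filter_add_card_filter_not _

theorem labelChanges_eq_sum_letterCount_mul [LinearOrder P] [LinearOrder T] [Fintype T]
    [LocallyFiniteOrderTop T] (d : P → T) :
    labelChanges d = ∑ c, ∑ c' ∈ Ioi c, letterCount d c * letterCount d c' := by
  rw [labelChanges_eq_card_label_lt,
    card_eq_sum_card_fiberwise (f := fun p => d p.1) (t := univ) fun _ _ => mem_univ _]
  refine sum_congr rfl fun c _ => ?_
  rw [card_eq_sum_card_fiberwise (f := fun p => d p.2) (t := Ioi c) fun p hp => ?_]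
  · refine sum_congr rfl fun c' hc' => ?_
    rw [letterCount, letterCount, ← card_product]
    congr 1
    grind
  · grind

end LabelChanges

section Potent

variable {K X : Type*} [PartialOrder X] [LocallyFiniteOrder X] [DecidableEq X] [Fintype X]
  [DecidableLT X] [Field K] [Fintype K] [DecidableEq K]

theorem ncard_potent_diagonalPart_eq {k : ℕ} (hk : (k : K) ≠ 0) {d : X → K} (hd : d ^ (k + 1) = d) :
    {f : IncidenceAlgebra K X | f ^ (k + 1) = f ∧ diagonalPart f = d}.ncard =
      Fintype.card K ^ labelChanges d := by
  have h := (stabilizer (unitriangular K X) (diagonalElement d)).card_mul_index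
  have split : #{p : X × X | p.1 < p.2} =
      #{p : X × X | p.1 < p.2 ∧ d p.1 = d p.2} + labelChanges d := by
    rw [labelChanges, ← filter_filter, ← filter_filter, card_filter_add_card_filter_not]
  rw [index_stabilizer, orbit_unitriangular_diagonalElement hk hd, card_stabilizer_diagonalElement,
    card_unitriangular, split, pow_add] at h
  exact Nat.eq_of_mul_eq_mul_left (pow_pos Fintype.card_pos _) h

theorem card_potent {k : ℕ} (hk : (k : K) ≠ 0) :
    Nat.card {f : IncidenceAlgebra K X // f ^ (k + 1) = f} =
      ∑ d : X → {x : K // x ^ (k + 1) = x}, Fintype.card K ^ labelChanges d := by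
  have : Finite (IncidenceAlgebra K X) := .of_injective _ DFunLike.coe_injective
  let diag (f : {f : IncidenceAlgebra K X // f ^ (k + 1) = f}) (a : X) :
      {x : K // x ^ (k + 1) = x} :=
    ⟨diagonalPart f.1 a, by rw [← Pi.pow_apply, ← map_pow, f.2]⟩
  rw [Nat.card_congr (Equiv.sigmaFiberEquiv diag).symm, Nat.card_sigma]
  refine sum_congr rfl fun d _ => ?_
  have fiber : {f // diag f = d} ≃
      {f : IncidenceAlgebra K X | f ^ (k + 1) = f ∧ diagonalPart f = Subtype.val ∘ d} :=
    (Equiv.subtypeEquivRight fun f => by simp [diag, funext_iff, Subtype.ext_iff]).trans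
      (Equiv.subtypeSubtypeEquivSubtypeInter _ fun f => diagonalPart f = Subtype.val ∘ d)
  rw [Nat.card_congr fiber, Nat.card_coe_set_eq,
    ncard_potent_diagonalPart_eq hk (d := Subtype.val ∘ d) (funext fun a => (d a).2),
    labelChanges_comp_injective Subtype.val_injective]

end Potent

section Rhombus

variable {P Q T : Type*}

/-- The poset obtained from two incomparable posets `P` and `Q` by adding a least and a greatest
element. For chains `P = {x₁ < ⋯ < x_n}` and `Q = {y₁ < ⋯ < y_m}` this is the rhombus poset, with
`x₀ = ⊥` and `x_{n+1} = ⊤`. -/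
abbrev Rhombus (P Q : Type*) := WithBot (WithTop (P ⊕ Q))

theorem sum_arrow_withBot [Fintype P] [DecidableEq P] [Fintype T] {M : Type*} [AddCommMonoid M]
    (F : (WithBot P → T) → M) :
    ∑ d, F d = ∑ c, ∑ d : P → T, F (WithBot.recBotCoe c d) := by
  rw [← Fintype.sum_prod_type' fun c d => F (WithBot.recBotCoe c d)]
  refine Fintype.sum_equiv Equiv.piOptionEquivProd _ _ fun d => congrArg F ?_
  ext (_ | _) <;> rfl

theorem sum_arrow_withTop [Fintype P] [DecidableEq P] [Fintype T] {M : Type*} [AddCommMonoid M]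
    (F : (WithTop P → T) → M) :
    ∑ d, F d = ∑ c, ∑ d : P → T, F (WithTop.recTopCoe c d) := by
  rw [← Fintype.sum_prod_type' fun c d => F (WithTop.recTopCoe c d)]
  refine Fintype.sum_equiv Equiv.piOptionEquivProd _ _ fun d => congrArg F ?_
  ext (_ | _) <;> rfl

-- Permuting the labels shows that every label of `⊥` contributes equally.
theorem sum_pow_labelChanges_withBot [Fintype P] [DecidableEq P] [Preorder P] [DecidableLT P]
    [DecidableLT (WithBot P)] [Fintype T] [DecidableEq T] (q : ℕ) (c : T) :
    ∑ d : WithBot P → T, q ^ labelChanges d =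
      Fintype.card T * ∑ d : P → T, q ^ (#{a | d a ≠ c} + labelChanges d) := by
  rw [sum_arrow_withBot, ← smul_eq_mul, ← card_univ, ← sum_const]
  refine sum_congr rfl fun c' _ => ?_
  refine Fintype.sum_equiv ((Equiv.refl P).arrowCongr (Equiv.swap c' c)) _ _ fun d => ?_
  rw [labelChanges_withBot]
  have labels_ne (a : P) : Equiv.swap c' c (d a) ≠ c ↔ d a ≠ c' := by
    rw [Ne, Equiv.swap_apply_eq_iff, Equiv.swap_apply_right]
  change _ = q ^ (#{a | Equiv.swap c' c (d a) ≠ c} + labelChanges (Equiv.swap c' c ∘ d))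
  simp only [labels_ne, labelChanges_comp_injective (Equiv.injective _)]
  rfl

theorem sum_pow_labelChanges_withBot_withTop [Fintype P] [DecidableEq P] [Preorder P]
    [DecidableLT P] [DecidableLT (WithBot (WithTop P))] [Fintype T] [DecidableEq T]
    (q : ℕ) (c : T) :
    ∑ d : WithBot (WithTop P) → T, q ^ labelChanges d =
      Fintype.card T * ∑ c', ∑ d : P → T,
        q ^ ((if c' ≠ c then 1 else 0) + #{a | d a ≠ c} + (#{a | d a ≠ c'} + labelChanges d)) := by
  classical
  rw [sum_pow_labelChanges_withBot q c, sum_arrow_withTop]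
  have labels_ne (c' : T) (d : P → T) :
      #{a | WithTop.recTopCoe (C := fun _ => T) c' d a ≠ c} =
        (if c' ≠ c then 1 else 0) + #{a | d a ≠ c} := by
    rw [card_filter, card_filter, sum_withTop]
    rfl
  simp only [labelChanges_withTop, labels_ne]
  rfl

-- The factor `F` of the theorem: `c` and `c'` are the labels of `⊥` and `⊤`.
theorem sum_pow_label_top [Fintype T] [DecidableEq T] (q : ℕ) (c : T) {n m : ℕ} {v w : T → ℕ}
    (hv : ∑ i, v i = n) (hw : ∑ i, w i = m) :
    ∑ c', q ^ ((if c' ≠ c then 1 else 0) + (n - v c + (m - w c)) + (n - v c' + (m - w c'))) =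
      q ^ (2 * (n - v c + (m - w c))) +
        ∑ j with j ≠ c, q ^ (2 * (n + m) + 1 - (v c + v j + w c + w j)) := by
  rw [← add_sum_erase _ _ (mem_univ c), filter_ne']
  congr 1
  · simp [two_mul]
  · refine sum_congr rfl fun j hj => ?_
    have hjc := ne_of_mem_erase hj
    have pair_le (u : T → ℕ) : u c + u j ≤ ∑ i, u i := by
      rw [← sum_pair hjc.symm]
      exact sum_le_sum_of_subset (subset_univ _)
    have := pair_le v
    have := pair_le w
    rw [if_pos hjc]
    congr 1
    omega

theorem sum_pow_labelChanges_rhombus [Fintype P] [LinearOrder P] [Fintype Q] [LinearOrder Q]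
    [DecidableLT (Rhombus P Q)] {T : Type*} [Fintype T] [LinearOrder T] [LocallyFiniteOrderTop T]
    {n m : ℕ} (hn : Fintype.card P = n) (hm : Fintype.card Q = m) (q : ℕ) (c : T) :
    ∑ d : Rhombus P Q → T, q ^ labelChanges d =
      ∑ v ∈ piAntidiag univ n, ∑ w ∈ piAntidiag univ m,
        Fintype.card T * Nat.multinomial univ v * Nat.multinomial univ w *
          q ^ (∑ i, ∑ j ∈ Ioi i, (v i * v j + w i * w j)) *
          (q ^ (2 * (n - v c + (m - w c))) +
            ∑ j with j ≠ c, q ^ (2 * (n + m) + 1 - (v c + v j + w c + w j))) := by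
  classical
  subst hn hm
  let g (c' : T) (v w : T → ℕ) : ℕ :=
    q ^ (∑ i, ∑ j ∈ Ioi i, (v i * v j + w i * w j)) *
      q ^ ((if c' ≠ c then 1 else 0) + (Fintype.card P - v c + (Fintype.card Q - w c)) +
        (Fintype.card P - v c' + (Fintype.card Q - w c')))
  have labels_ne (d : P ⊕ Q → T) (c : T) : #{x | d x ≠ c} =
      Fintype.card P - letterCount (d ∘ Sum.inl) c +
        (Fintype.card Q - letterCount (d ∘ Sum.inr) c) := by
    simp only [← card_ne_eq_card_sub_letterCount, card_filter, Fintype.sum_sum_type]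
    rfl
  have weight (c' : T) (d : P ⊕ Q → T) :
      q ^ ((if c' ≠ c then 1 else 0) + #{x | d x ≠ c} + (#{x | d x ≠ c'} + labelChanges d)) =
        g c' (letterCount (d ∘ Sum.inl)) (letterCount (d ∘ Sum.inr)) := by
    rw [labels_ne, labels_ne, labelChanges_sum, labelChanges_eq_sum_letterCount_mul,
      labelChanges_eq_sum_letterCount_mul]
    simp only [g, sum_add_distrib]
    ring
  simp only [sum_pow_labelChanges_withBot_withTop q c, weight, sum_comp_letterCount_inl_inr (g _)]
  rw [sum_comm, mul_sum]
  refine sum_congr rfl fun v hv => ?_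
  rw [sum_comm, mul_sum]
  refine sum_congr rfl fun w hw => ?_
  rw [← sum_pow_label_top q c (mem_piAntidiag.1 hv).1 (mem_piAntidiag.1 hw).1]
  simp only [g, smul_eq_mul, ← mul_sum, mul_assoc]

theorem Rhombus.eq_bot_or_top_or_inl_or_inr (a : Rhombus P Q) :
    a = ⊥ ∨ a = ⊤ ∨ (∃ i, a = WithBot.some (WithTop.some (.inl i))) ∨
      ∃ j, a = WithBot.some (WithTop.some (.inr j)) := by
  rcases a with _ | _ | i | j
  exacts [.inl rfl, .inr (.inl rfl), .inr (.inr (.inl ⟨i, rfl⟩)), .inr (.inr (.inr ⟨j, rfl⟩))]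

theorem nonempty_orderIso_rhombus {X : Type*} [Preorder X] {n m : ℕ} {x : Fin (n + 2) → X}
    {y : Fin m → X} (hxx : ∀ i j, x i ≤ x j ↔ i ≤ j) (hyy : ∀ i j, y i ≤ y j ↔ i ≤ j)
    (hxy : ∀ i j, x i ≤ y j ↔ i = 0) (hyx : ∀ i j, y j ≤ x i ↔ i = Fin.last (n + 1))
    (hcover : ∀ w, (∃ i, w = x i) ∨ ∃ j, w = y j) :
    Nonempty (X ≃o Rhombus (Fin n) (Fin m)) := by
  let φ : Rhombus (Fin n) (Fin m) → X := WithBot.recBotCoe (x 0) <|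
    WithTop.recTopCoe (x (Fin.last (n + 1))) <| Sum.elim (fun i => x i.succ.castSucc) y
  have φ_bot : φ ⊥ = x 0 := rfl
  have φ_top : φ ⊤ = x (Fin.last (n + 1)) := rfl
  have φ_inl (i : Fin n) : φ (WithBot.some (WithTop.some (.inl i))) = x i.succ.castSucc := rfl
  have φ_inr (j : Fin m) : φ (WithBot.some (WithTop.some (.inr j))) = y j := rfl
  have φ_le (a b) : φ a ≤ φ b ↔ a ≤ b := by
    obtain rfl | rfl | ⟨i, rfl⟩ | ⟨i, rfl⟩ := Rhombus.eq_bot_or_top_or_inl_or_inr a <;>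
      obtain rfl | rfl | ⟨j, rfl⟩ | ⟨j, rfl⟩ := Rhombus.eq_bot_or_top_or_inl_or_inr b <;>
      simp only [φ_bot, φ_top, φ_inl, φ_inr, hxx, hyy, hxy, hyx, Fin.ext_iff, Fin.le_def] <;>
      simp [(Fin.is_lt (n := n) _).ne]
  have φ_surjective : φ.Surjective := fun w => by
    obtain ⟨i, rfl⟩ | ⟨j, rfl⟩ := hcover w
    · induction i using Fin.lastCases with
      | last => exact ⟨⊤, φ_top⟩
      | cast i =>
        induction i using Fin.cases with
        | zero => exact ⟨⊥, φ_bot⟩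
        | succ i => exact ⟨_, φ_inl i⟩
    · exact ⟨_, φ_inr j⟩
  exact ⟨(RelIso.ofSurjective (OrderEmbedding.ofMapLEIff φ φ_le) φ_surjective).symm⟩

theorem stmt_14_general {K : Type*} [Field K] [Fintype K] [DecidableEq K] {k s n m : ℕ}
    (hk : (k : K) ≠ 0) (hs : #{x : K | x ^ (k + 1) = x} = s) (c : Fin s)
    {X : Type*} [PartialOrder X] [DecidableEq X] [LocallyFiniteOrder X]
    (e : X ≃o Rhombus (Fin n) (Fin m)) :
    Nat.card {f : IncidenceAlgebra K X // f ^ (k + 1) = f} =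
      ∑ v ∈ Finset.Nat.antidiagonalTuple s n, ∑ w ∈ Finset.Nat.antidiagonalTuple s m,
        s * Nat.multinomial univ v * Nat.multinomial univ w *
          Fintype.card K ^ (∑ i, ∑ j ∈ Ioi i, (v i * v j + w i * w j)) *
          (Fintype.card K ^ (2 * (n - v c + (m - w c))) +
            ∑ j with j ≠ c, Fintype.card K ^ (2 * (n + m) + 1 - (v c + v j + w c + w j))) := by
  classical
  have := Fintype.ofEquiv _ e.symm.toEquiv
  have φ : {x : K // x ^ (k + 1) = x} ≃ Fin s :=
    Fintype.equivFinOfCardEq (by rw [Fintype.card_subtype, hs])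
  have transport (d : X → {x : K // x ^ (k + 1) = x}) :
      labelChanges (e.toEquiv.arrowCongr φ d) = labelChanges d := by
    rw [← labelChanges_comp_injective φ.injective d]
    exact labelChanges_comp_orderIso e.symm (φ ∘ d)
  rw [card_potent hk]
  calc
    _ = ∑ d : Rhombus (Fin n) (Fin m) → Fin s, Fintype.card K ^ labelChanges d :=
      Fintype.sum_equiv (e.toEquiv.arrowCongr φ) _ _ fun d => by rw [transport]
    _ = _ := by
      rw [sum_pow_labelChanges_rhombus (Fintype.card_fin n) (Fintype.card_fin m) _ c,
        Fintype.card_fin]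
      simp_rw [piAntidiag_univ_fin_eq_antidiagonalTuple]

end Rhombus

/-- Counting `(k+1)`-potent elements of the incidence algebra of the rhombus poset
`X = {x₀, x₁, …, x_{n+1}, y₁, …, y_m}` (indexed here by `x : Fin (n+2) → X`, a chain, and
`y : Fin m → X`, a chain with `x₀ ≤ y₁` and `y_m ≤ x_{n+1}`): their number equals
`∑ s · (n!/(n₁!⋯n_s!)) · (m!/(m₁!⋯m_s!)) · q^(∑_{i<j}(n_i n_j + m_i m_j)) · F`, where
`F = q^(2(n−n₁+m−m₁)) + ∑_{j=2}^{s} q^(2(n+m)+1−(n₁+n_j+m₁+m_j))`. -/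
theorem stmt_14 {K : Type*} [Field K] [Fintype K] [DecidableEq K] (q k s n m : ℕ)
    (hq : Fintype.card K = q) (hk : 1 ≤ k)
    (hchar_k : (k : K) ≠ 0) (hchar_k1 : ((k + 1 : ℕ) : K) ≠ 0)
    (hs : (Finset.univ.filter (fun x : K => x ^ (k + 1) = x)).card = s) (hs0 : 0 < s)
    (X : Type*) [Fintype X] [PartialOrder X] [DecidableEq X] [LocallyFiniteOrder X]
    (x : Fin (n + 2) → X) (y : Fin m → X)
    (hxx : ∀ i j, x i ≤ x j ↔ i ≤ j)
    (hyy : ∀ i j, y i ≤ y j ↔ i ≤ j)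
    (hxy : ∀ i j, x i ≤ y j ↔ i = 0)
    (hyx : ∀ i j, y j ≤ x i ↔ i = Fin.last (n + 1))
    (hxinj : Function.Injective x) (hyinj : Function.Injective y)
    (hne : ∀ i j, x i ≠ y j)
    (hcover : ∀ w : X, (∃ i, w = x i) ∨ (∃ j, w = y j)) :
    Nat.card {f : IncidenceAlgebra K X // f ^ (k + 1) = f}
      = ∑ v ∈ Finset.Nat.antidiagonalTuple s n,
          ∑ w ∈ Finset.Nat.antidiagonalTuple s m,
            s * Nat.multinomial Finset.univ v * Nat.multinomial Finset.univ w *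
              q ^ (∑ i : Fin s, ∑ j ∈ Finset.Ioi i, (v i * v j + w i * w j)) *
              (q ^ (2 * ((n - v ⟨0, hs0⟩) + (m - w ⟨0, hs0⟩))) +
                ∑ j ∈ Finset.univ.filter (fun j : Fin s => j ≠ ⟨0, hs0⟩),
                  q ^ (2 * (n + m) + 1 - (v ⟨0, hs0⟩ + v j + w ⟨0, hs0⟩ + w j))) := by
  obtain ⟨e⟩ := nonempty_orderIso_rhombus hxx hyy hxy hyx hcover
  exact hq ▸ stmt_14_general hchar_k hs ⟨0, hs0⟩ e
end
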